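/- arXiv:0912.5263 — 5 statements merged into one kernel-verified Lean document; each statement's English description precedes it below -/
import Mathlib

section
/- The language L₀ satisfies: (a) the word 11211 does not belong to L₀; (b) the word 22 does not belong to L₀; (c) the words 1ʲ for j ∈ {0,2,3,5,6} are bispecial with multiplicity i(1ʲ) = 0; (d) the words 1 and 1111 are bispecial with multiplicity 1; (e) the words 12121 and 1111111 are bispecial with multiplicity −1. -/
/-!
Every word of `L₀` labels a path in a small partial deterministic automaton (`step`), which
records that `L₀` consists of factors of `1^ω`, of `(12)^ω`, and of words in which the blocks
`212` are separated by runs of exactly four or seven letters `1`.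

The automaton is compatible with `σ`: reading `σ(a)` between the states `phi s` and `phi t` is
possible as soon as `a` can be read from `s` to `t` (`run_sigma`). Hence a cycle labelled `w` is
turned into a cycle labelled `σ(w)`, and as `1` and `12` label cycles, so do all `σⁿ(1)` and
`σⁿ(12)`; factors of their powers label paths (`accepted_of_mem_L0`). This excludes words from
`L₀`. Conversely four explicit periodic words, `1^ω`, `(12)^ω`, `σ(1)^ω` and `σ(12)^ω`, already
contain every short word needed (`mem_L0_of_shortFactor`). For each `v` in the theorem the upper
and lower bounds agree on the extensions of `v`, so the multiplicity is a finite
computation (`bispecial_mult`).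
-/

/-- `powWord w k` is the word `w` concatenated `k` times. -/
def powWord {A : Type*} (w : List A) (k : ℕ) : List A := (List.replicate k w).flatten

/-- `v` is a factor of the one-sided infinite periodic word `w^ω`. -/
def IsFactorPer {A : Type*} (w v : List A) : Prop := ∃ k, v <:+: powWord w k

/-- The number of left extensions of `v` inside `L`. -/
noncomputable def mL {A : Type*} (L : Set (List A)) (v : List A) : ℕ := {a : A | a :: v ∈ L}.ncard

/-- The number of right extensions of `v` inside `L`. -/
noncomputable def mR {A : Type*} (L : Set (List A)) (v : List A) : ℕ := {b : A | v ++ [b] ∈ L}.ncard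

/-- The number of two-sided extensions of `v` inside `L`. -/
noncomputable def mB {A : Type*} (L : Set (List A)) (v : List A) : ℕ :=
  {p : A × A | p.1 :: (v ++ [p.2]) ∈ L}.ncard

/-- A word of `L` is bispecial if it has at least two left and two right extensions. -/
def Bispecial {A : Type*} (L : Set (List A)) (v : List A) : Prop :=
  v ∈ L ∧ 2 ≤ mL L v ∧ 2 ≤ mR L v

/-- The multiplicity `i(v) = m_b(v) - m_l(v) - m_r(v) + 1` of a word. -/
noncomputable def mult {A : Type*} (L : Set (List A)) (v : List A) : ℤ :=
  (mB L v : ℤ) - (mL L v : ℤ) - (mR L v : ℤ) + 1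

/-- `b(n)`: the sum of the multiplicities of the bispecial words of length `n`. -/
noncomputable def bfun {A : Type*} (L : Set (List A)) (n : ℕ) : ℤ :=
  ∑ᶠ v ∈ {v : List A | Bispecial L v ∧ v.length = n}, mult L v

/-- The complexity `p(n)`: the number of words of length `n` in `L`. -/
noncomputable def comp {A : Type*} (L : Set (List A)) (n : ℕ) : ℕ :=
  {v : List A | v ∈ L ∧ v.length = n}.ncard

/-- The substitution `σ : 1 ↦ 1121211, 2 ↦ 111` on the alphabet `{1,2}`. -/
def sigma0 (a : ℕ) : List ℕ :=
  if a = 1 then [1, 1, 2, 1, 2, 1, 1] else if a = 2 then [1, 1, 1] else [a]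

/-- A substitution extended to words by concatenation. -/
def substW (f : ℕ → List ℕ) (w : List ℕ) : List ℕ := w.flatMap f

/-- `σⁿ(w)`: the `n`-th iterate of the substitution `σ` on the word `w`. -/
def sigIt : ℕ → List ℕ → List ℕ
  | 0, w => w
  | n + 1, w => substW sigma0 (sigIt n w)

/-- `L₀`: the factors of the periodic words `(σⁿ(1))^ω` and `(σⁿ(12))^ω`, `n ∈ ℕ`. -/
def L0 : Set (List ℕ) :=
  {v | ∃ n : ℕ, IsFactorPer (sigIt n [1]) v ∨ IsFactorPer (sigIt n [1, 2]) v}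

/-- Transitions of the automaton. For `r ≤ 7`, state `r` means that `r` letters `1` have been
read since the end of a block `212`; states `8` and `9` mean that `2`, respectively `21`, of
the next block `212` has been read. State `10` is a loop for `1^ω`, and the states `11`, `12`
form a cycle for `(12)^ω`, `11` being the state reached after a letter `2`. -/
def step (s : Fin 13) (a : ℕ) : Option (Fin 13) :=
  match s, a with
  | 0, 1 => some 1
  | 1, 1 => some 2
  | 2, 1 => some 3
  | 3, 1 => some 4
  | 4, 1 => some 5
  | 4, 2 => some 8
  | 5, 1 => some 6
  | 6, 1 => some 7
  | 7, 2 => some 8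
  | 8, 1 => some 9
  | 9, 2 => some 0
  | 10, 1 => some 10
  | 11, 1 => some 12
  | 12, 2 => some 11
  | _, _ => none

/-- The state reached from `s` by reading a word, if any. -/
def run (s : Fin 13) : List ℕ → Option (Fin 13)
  | [] => some s
  | a :: w => (step s a).bind fun t => run t w

theorem run_append (s : Fin 13) (u v : List ℕ) :
    run s (u ++ v) = (run s u).bind fun t => run t v := by
  induction u generalizing s with
  | nil => rfl
  | cons a u ih => cases h : step s a <;> simp [run, h, ih]

/-- A word is accepted if it labels a path of the automaton from an arbitrary state. -/
def Accepted (v : List ℕ) : Prop := ∃ s, (run s v).isSome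

instance (v : List ℕ) : Decidable (Accepted v) := by unfold Accepted; infer_instance

theorem Accepted.of_infix {v w : List ℕ} (h : v <:+: w) (hw : Accepted w) : Accepted v := by
  obtain ⟨x, y, rfl⟩ := h
  obtain ⟨s, hs⟩ := hw
  rw [run_append, run_append] at hs
  cases h1 : run s x with
  | none => simp [h1] at hs
  | some t =>
    refine ⟨t, ?_⟩
    cases h2 : run t v with
    | none => simp [h1, h2] at hs
    | some t' => rfl

theorem step_letter {s t : Fin 13} {a : ℕ} (h : step s a = some t) : a = 1 ∨ a = 2 := by
  unfold step at h
  split at h <;> simp_all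

theorem Accepted.letter {v : List ℕ} (h : Accepted v) {a : ℕ} (ha : a ∈ v) : a = 1 ∨ a = 2 := by
  obtain ⟨x, y, rfl⟩ := List.append_of_mem ha
  obtain ⟨s, hs⟩ := Accepted.of_infix (v := [a]) ⟨x, y, by simp⟩ h
  cases h1 : step s a with
  | none => simp [run, h1] at hs
  | some t => exact step_letter h1

/-- The state reached after the image under `σ` of a word leading to state `s`: it is `5` if the
last letter read was `2` (the run of `1`s is then `11` from `σ(1)` followed by `σ(2) = 111`),
and `2` if it was `1`. -/
def phi (s : Fin 13) : Fin 13 := if s = 0 ∨ s = 8 ∨ s = 11 then 5 else 2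

theorem run_sigma0 {s t : Fin 13} {a : ℕ} (h : step s a = some t) :
    run (phi s) (sigma0 a) = some (phi t) := by
  rcases step_letter h with rfl | rfl
  · revert s t; decide
  · revert s t; decide

theorem run_sigma {s t : Fin 13} {w : List ℕ} (h : run s w = some t) :
    run (phi s) (substW sigma0 w) = some (phi t) := by
  induction w generalizing s with
  | nil => simp_all [run, substW]
  | cons a w ih =>
    obtain ⟨r, h1, h2⟩ := Option.bind_eq_some_iff.1 h
    have := ih h2
    simp only [substW, List.flatMap_cons] at this ⊢
    rw [run_append, run_sigma0 h1]
    exact this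

theorem exists_cycle_sigIt {w : List ℕ} (h : ∃ s, run s w = some s) (n : ℕ) :
    ∃ s, run s (sigIt n w) = some s := by
  induction n with
  | zero => exact h
  | succ n ih => exact ih.imp' phi fun _ hs => run_sigma hs

theorem accepted_of_cycle {w v : List ℕ} (h : ∃ s, run s w = some s) (hv : IsFactorPer w v) :
    Accepted v := by
  obtain ⟨s, hs⟩ := h
  obtain ⟨k, hk⟩ := hv
  have hpow : run s (powWord w k) = some s := by
    clear hk
    induction k with
    | zero => rfl
    | succ k ih =>
      simp only [powWord, List.replicate_succ, List.flatten_cons] at ih ⊢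
      rw [run_append, hs]
      exact ih
  exact Accepted.of_infix hk ⟨s, by simp [hpow]⟩

/-- The upper bound on `L₀`. -/
theorem accepted_of_mem_L0 {v : List ℕ} (h : v ∈ L0) : Accepted v := by
  obtain ⟨n, h | h⟩ := h
  · exact accepted_of_cycle (exists_cycle_sigIt ⟨10, rfl⟩ n) h
  · exact accepted_of_cycle (exists_cycle_sigIt ⟨11, rfl⟩ n) h

/-- Factors of long enough powers of `1`, `12`, `σ(1)` and `σ(12)`; the exponents suffice for
all extensions in `L₀`, of length at most nine, of the words of the theorem. -/
def ShortFactor (v : List ℕ) : Prop :=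
  v <:+: powWord [1] 9 ∨ v <:+: powWord [1, 2] 4 ∨
    v <:+: powWord (sigIt 1 [1]) 2 ∨ v <:+: powWord (sigIt 1 [1, 2]) 2

instance (v : List ℕ) : Decidable (ShortFactor v) := by unfold ShortFactor; infer_instance

/-- The lower bound on `L₀`. -/
theorem mem_L0_of_shortFactor {v : List ℕ} (h : ShortFactor v) : v ∈ L0 := by
  rcases h with h | h | h | h
  · exact ⟨0, .inl ⟨_, h⟩⟩
  · exact ⟨0, .inr ⟨_, h⟩⟩
  · exact ⟨1, .inl ⟨_, h⟩⟩
  · exact ⟨1, .inr ⟨_, h⟩⟩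

/-- If the two bounds on `L₀` agree on all one-letter and two-sided extensions of `v` by letters
of `{1,2}`, then the extensions can be counted with the decidable lower bound. -/
theorem bispecial_mult (v : List ℕ) (i : ℤ) (hv : ShortFactor v)
    (hl : ∀ a ∈ ({1, 2} : Finset ℕ), Accepted (a :: v) → ShortFactor (a :: v))
    (hr : ∀ b ∈ ({1, 2} : Finset ℕ), Accepted (v ++ [b]) → ShortFactor (v ++ [b]))
    (hb : ∀ p ∈ ({1, 2} ×ˢ {1, 2} : Finset (ℕ × ℕ)),
      Accepted (p.1 :: (v ++ [p.2])) → ShortFactor (p.1 :: (v ++ [p.2])))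
    (cl : (({1, 2} : Finset ℕ).filter fun a => ShortFactor (a :: v)).card = 2)
    (cr : (({1, 2} : Finset ℕ).filter fun b => ShortFactor (v ++ [b])).card = 2)
    (cb : ((({1, 2} ×ˢ {1, 2} : Finset (ℕ × ℕ)).filter
      fun p => ShortFactor (p.1 :: (v ++ [p.2]))).card : ℤ) = i + 3) :
    Bispecial L0 v ∧ mult L0 v = i := by
  have el : mL L0 v = 2 := by
    rw [← cl, mL, ← Set.ncard_coe_finset]
    congr 1
    ext a
    simp only [Set.mem_ofPred_eq, Finset.coe_filter]
    refine ⟨fun h => ?_, fun h => mem_L0_of_shortFactor h.2⟩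
    have h' := accepted_of_mem_L0 h
    have ha : a ∈ ({1, 2} : Finset ℕ) := by simpa using h'.letter (a := a) (by simp)
    exact ⟨ha, hl a ha h'⟩
  have er : mR L0 v = 2 := by
    rw [← cr, mR, ← Set.ncard_coe_finset]
    congr 1
    ext b
    simp only [Set.mem_ofPred_eq, Finset.coe_filter]
    refine ⟨fun h => ?_, fun h => mem_L0_of_shortFactor h.2⟩
    have h' := accepted_of_mem_L0 h
    have hb : b ∈ ({1, 2} : Finset ℕ) := by simpa using h'.letter (a := b) (by simp)
    exact ⟨hb, hr b hb h'⟩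
  have eb : (mB L0 v : ℤ) = i + 3 := by
    rw [← cb, mB, ← Set.ncard_coe_finset]
    congr 2
    ext p
    simp only [Set.mem_ofPred_eq, Finset.coe_filter]
    refine ⟨fun h => ?_, fun h => mem_L0_of_shortFactor h.2⟩
    have h' := accepted_of_mem_L0 h
    have hp : p ∈ ({1, 2} ×ˢ {1, 2} : Finset (ℕ × ℕ)) := by
      rw [Finset.mem_product]
      exact ⟨by simpa using h'.letter (a := p.1) (by simp),
        by simpa using h'.letter (a := p.2) (by simp)⟩
    exact ⟨hp, hb p hp h'⟩
  refine ⟨⟨mem_L0_of_shortFactor hv, el.ge, er.ge⟩, ?_⟩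
  rw [mult, eb, el, er]
  push_cast
  ring

/-- Properties of `L₀`: `11211 ∉ L₀`, `22 ∉ L₀`; `1ʲ` for `j ∈ {0,2,3,5,6}` is bispecial
with multiplicity `0`; `1` and `1111` are bispecial with multiplicity `1`; `12121` and
`1111111` are bispecial with multiplicity `-1`. -/
theorem properties_L0 :
    [1, 1, 2, 1, 1] ∉ L0 ∧
    [2, 2] ∉ L0 ∧
    (∀ j ∈ ({0, 2, 3, 5, 6} : Set ℕ),
      Bispecial L0 (List.replicate j 1) ∧ mult L0 (List.replicate j 1) = 0) ∧
    (Bispecial L0 [1] ∧ mult L0 [1] = 1) ∧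
    (Bispecial L0 (List.replicate 4 1) ∧ mult L0 (List.replicate 4 1) = 1) ∧
    (Bispecial L0 [1, 2, 1, 2, 1] ∧ mult L0 [1, 2, 1, 2, 1] = -1) ∧
    (Bispecial L0 (List.replicate 7 1) ∧ mult L0 (List.replicate 7 1) = -1) := by
  refine ⟨fun h => absurd (accepted_of_mem_L0 h) (by decide),
    fun h => absurd (accepted_of_mem_L0 h) (by decide), ?_, ?_, ?_, ?_, ?_⟩
  · intro j hj
    simp only [Set.mem_insert_iff, Set.mem_singleton_iff] at hj
    rcases hj with rfl | rfl | rfl | rfl | rfl <;> apply bispecial_mult <;> decide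
  all_goals apply bispecial_mult <;> decide
end

section
/- The bispecial words v of the language L₀ with nonzero multiplicity i(v) are exactly the four families: σ̂ⁿ(1) and σ̂ⁿ(1111) with i = 1 (strong bispecial words), and σ̂ⁿ(12121) and σ̂ⁿ(1111111) with i = −1 (weak bispecial words), where n ranges over ℕ. -/
/-- `σ̂(w) = 11·σ(w)·11`. -/
def sigHat (w : List ℕ) : List ℕ := [1, 1] ++ substW sigma0 w ++ [1, 1]

/-- `σ̂ⁿ(w)`: the `n`-th iterate of `σ̂` on the word `w`. -/
def sigHatIt : ℕ → List ℕ → List ℕ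
  | 0, w => w
  | n + 1, w => sigHat (sigHatIt n w)


local notation "σ" => substW sigma0

/-- `u` is a word over the alphabet `{1,2}`. -/
def Bin (u : List ℕ) : Prop := ∀ a ∈ u, a = 1 ∨ a = 2

/-- Words over `{1,2}` that avoid `22`. -/
def Good (u : List ℕ) : Prop := Bin u ∧ ¬ [2, 2] <:+: u

/-- The pairs `(a, b)` of letters with `avb ∈ L₀`. -/
def ext (v : List ℕ) : Set (ℕ × ℕ) := {p | p.1 :: (v ++ [p.2]) ∈ L0}

/-! ### Decoding images of `σ` -/

@[simp] lemma sg_nil : σ [] = [] := rfl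
@[simp] lemma sg_one (u : List ℕ) : σ (1 :: u) = 1 :: 1 :: 2 :: 1 :: 2 :: 1 :: 1 :: σ u := rfl
@[simp] lemma sg_two (u : List ℕ) : σ (2 :: u) = 1 :: 1 :: 1 :: σ u := rfl
@[simp] lemma sg_append (u w : List ℕ) : σ (u ++ w) = σ u ++ σ w := by simp [substW]

lemma bin_cons {a : ℕ} {u : List ℕ} : Bin (a :: u) ↔ (a = 1 ∨ a = 2) ∧ Bin u := by
  simp [Bin]

lemma bin_append {u w : List ℕ} : Bin (u ++ w) ↔ Bin u ∧ Bin w := by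
  simp [Bin, or_imp, forall_and]

lemma bin_infix {u w : List ℕ} (h : u <:+: w) (hw : Bin w) : Bin u :=
  fun a ha => hw a (h.subset ha)

lemma bin_reverse {u : List ℕ} : Bin u.reverse ↔ Bin u := by simp [Bin]

lemma sg_reverse (u : List ℕ) (hu : Bin u) : σ u.reverse = (σ u).reverse := by
  induction u with
  | nil => rfl
  | cons a u ih =>
    rw [bin_cons] at hu
    obtain ⟨rfl | rfl, h⟩ := hu <;> simp [ih h]

lemma sg_bin (u : List ℕ) (hu : Bin u) : Bin (σ u) := by
  induction u with
  | nil => simp [Bin]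
  | cons a u ih =>
    rw [bin_cons] at hu
    obtain ⟨rfl | rfl, h⟩ := hu <;> simp [ih h, bin_cons]

lemma sg_inj (u w : List ℕ) (hu : Bin u) (hw : Bin w) (h : σ u = σ w) : u = w := by
  induction u generalizing w with
  | nil =>
    rcases w with _ | ⟨b, w⟩
    · rfl
    · rw [bin_cons] at hw
      obtain ⟨rfl | rfl, _⟩ := hw <;> simp at h
  | cons a u ih =>
    rcases w with _ | ⟨b, w⟩
    · rw [bin_cons] at hu
      obtain ⟨rfl | rfl, _⟩ := hu <;> simp at h
    · rw [bin_cons] at hu hw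
      obtain ⟨rfl | rfl, h1⟩ := hu <;> obtain ⟨rfl | rfl, h2⟩ := hw <;> simp at h
      · rw [ih w h1 h2 h]
      · rw [ih w h1 h2 h]

/-- Every nonempty image starts with `11`. -/
lemma sg_head (u : List ℕ) (hu : Bin u) : σ u = [] ∨ ∃ t, σ u = 1 :: 1 :: t := by
  rcases u with _ | ⟨a, u⟩
  · simp
  · rw [bin_cons] at hu
    obtain ⟨rfl | rfl, _⟩ := hu <;> simp

/-- Synchronization: in an image of `σ`, every occurrence of `112` is the beginning of a block
`σ(1)`. -/
lemma dec112 (u s t : List ℕ) (hu : Bin u) (h : σ u = s ++ 1 :: 1 :: 2 :: t) :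
    ∃ u1 u2, u = u1 ++ 1 :: u2 ∧ σ u1 = s := by
  induction u generalizing s with
  | nil => simp at h
  | cons a u ih =>
    rw [bin_cons] at hu
    obtain ⟨ha, hb⟩ := hu
    have key : (a = 1 ∧ s = []) ∨ ∃ s', s = σ [a] ++ s' ∧ σ u = s' ++ 1 :: 1 :: 2 :: t := by
      rcases ha with rfl | rfl
      · rcases s with _ | ⟨_, _ | ⟨_, _ | ⟨_, _ | ⟨_, _ | ⟨_, _ | ⟨_, _ | ⟨_, s⟩⟩⟩⟩⟩⟩⟩ <;>
          rcases sg_head u hb with h' | ⟨t', h'⟩ <;> rw [sg_one, h'] at h <;>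
          first
          | (simp_all; done)
          | (simp only [List.cons_append, List.cons.injEq] at h
             obtain ⟨rfl, rfl, rfl, rfl, rfl, rfl, rfl, h⟩ := h
             exact Or.inr ⟨_, rfl, h'.trans h⟩)
      · rcases s with _ | ⟨_, _ | ⟨_, _ | ⟨_, s⟩⟩⟩ <;>
          rcases sg_head u hb with h' | ⟨t', h'⟩ <;> rw [sg_two, h'] at h <;>
          first
          | (simp_all; done)
          | (simp only [List.cons_append, List.cons.injEq] at h
             obtain ⟨rfl, rfl, rfl, h⟩ := h
             exact Or.inr ⟨_, rfl, h'.trans h⟩)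
    rcases key with ⟨rfl, rfl⟩ | ⟨s', rfl, h'⟩
    · exact ⟨[], u, rfl, rfl⟩
    · obtain ⟨u1, u2, rfl, h2⟩ := ih s' hb h'
      exact ⟨a :: u1, u2, rfl, by rw [← h2, ← sg_append]; rfl⟩

/-- Mirror image of `dec112`: every occurrence of `211` is the end of a block `σ(1)`. -/
lemma dec211 (u s t : List ℕ) (hu : Bin u) (h : σ u = s ++ 2 :: 1 :: 1 :: t) :
    ∃ u1 u2, u = u1 ++ 1 :: u2 ∧ σ u2 = t := by
  have hr := bin_reverse.2 hu
  obtain ⟨u1, u2, h1, h2⟩ := dec112 u.reverse t.reverse s.reverse hr (by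
    rw [sg_reverse u hu, h]; simp)
  have hb : Bin u1 := by rw [h1, bin_append] at hr; exact hr.1
  refine ⟨u2.reverse, u1.reverse, ?_, ?_⟩
  · rw [← List.reverse_reverse u, h1]; simp
  · rw [sg_reverse _ hb, h2]; simp

/-- The letter that follows the prefix `11` of `σ(b)11` is `2` for `b = 1` and `1` for `b = 2`. -/
lemma dec_right (u t : List ℕ) (y : ℕ) (hu : Bin u) (h : σ u = 1 :: 1 :: y :: t) :
    ∃ b u', u = b :: u' ∧ y = 3 - b := by
  rcases u with _ | ⟨a, u⟩
  · simp at h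
  · rw [bin_cons] at hu
    obtain ⟨rfl | rfl, _⟩ := hu <;> simp at h <;> exact ⟨_, _, rfl, by simp [h.1]⟩

lemma dec_left (u s : List ℕ) (x : ℕ) (hu : Bin u) (h : σ u = s ++ [x, 1, 1]) :
    ∃ a u', u = u' ++ [a] ∧ x = 3 - a := by
  obtain ⟨b, u', h1, h2⟩ := dec_right u.reverse s.reverse x (bin_reverse.2 hu) (by
    rw [sg_reverse u hu, h]; simp)
  refine ⟨b, u'.reverse, ?_, h2⟩
  rw [← List.reverse_reverse u, h1]; simp

/-- A two-sided extension of `11m11` in an image, with `m` starting with `112` and ending with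
`211`, comes from a two-sided extension of a preimage of `m`. -/
lemma desubst (u s t m z z' : List ℕ) (x y : ℕ) (hu : Bin u)
    (h : σ u = s ++ x :: (1 :: 1 :: m ++ [1, 1] ++ [y]) ++ t)
    (hz : m = 1 :: 1 :: 2 :: z) (hz' : m = z' ++ [2, 1, 1]) :
    ∃ a w b, a :: (w ++ [b]) <:+: u ∧ σ w = m ∧ x = 3 - a ∧ y = 3 - b := by
  obtain ⟨u1, u2, h1, h2⟩ := dec112 u (s ++ [x, 1, 1]) (z ++ [1, 1, y] ++ t) hu (by
    rw [h, hz]; simp)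
  obtain ⟨u3, u4, h3, h4⟩ := dec211 u (s ++ [x, 1, 1] ++ z') ([1, 1, y] ++ t) hu (by
    rw [h, hz']; simp)
  have hb1 : Bin u1 := by rw [h1, bin_append] at hu; exact hu.1
  have hb4 : Bin u4 := by rw [h3, bin_append, bin_cons] at hu; exact hu.2.2
  have hu3 : u = (u3 ++ [1]) ++ u4 := by simp [h3]
  obtain ⟨a, u1', h5, hx⟩ := dec_left u1 s x hb1 h2
  obtain ⟨b, u4', h6, hy⟩ := dec_right u4 t y hb4 (by simp [h4])
  have e1 : u1 ++ (1 :: u2) = (u3 ++ [1]) ++ u4 := by rw [← h1, hu3]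
  have hσ : σ (u3 ++ [1]) = σ u1 ++ m := by
    have : σ (u3 ++ [1]) ++ σ u4 = (σ u1 ++ m) ++ σ u4 := by
      rw [← sg_append, ← hu3, h, h2, h4]; simp
    exact List.append_cancel_right this
  have : ∃ w, u3 ++ [1] = u1 ++ w := by
    rcases List.append_eq_append_iff.1 e1 with ⟨c, hc, _⟩ | ⟨c, hc, _⟩
    · exact ⟨c, hc⟩
    · have := congrArg List.length hσ
      rw [hc, sg_append, hz] at this
      simp at this
  obtain ⟨w, hw⟩ := this
  refine ⟨a, w, b, ⟨u1', u4', ?_⟩, ?_, hx, hy⟩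
  · rw [hu3, hw, h5, h6]; simp
  · rw [hw, sg_append] at hσ
    exact List.append_cancel_left hσ

/-! ### Structure of `L₀` -/

lemma powWord_succ (w : List ℕ) (k : ℕ) : powWord w (k + 1) = w ++ powWord w k := by
  simp [powWord, List.replicate_succ]

lemma powWord_succ' (w : List ℕ) (k : ℕ) : powWord w (k + 1) = powWord w k ++ w := by
  simp [powWord, List.replicate_succ']

lemma sg_powWord (w : List ℕ) (k : ℕ) : σ (powWord w k) = powWord (σ w) k := by
  induction k with
  | zero => rfl
  | succ k ih => rw [powWord_succ, powWord_succ, sg_append, ih]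

lemma L0_infix {u v : List ℕ} (h : u <:+: v) (hv : v ∈ L0) : u ∈ L0 := by
  obtain ⟨n, ⟨k, hk⟩ | ⟨k, hk⟩⟩ := hv
  · exact ⟨n, Or.inl ⟨k, h.trans hk⟩⟩
  · exact ⟨n, Or.inr ⟨k, h.trans hk⟩⟩

lemma sg_infix {u v : List ℕ} (h : u <:+: v) : σ u <:+: σ v := by
  obtain ⟨s, t, rfl⟩ := h
  exact ⟨σ s, σ t, by simp⟩

lemma L0_sg {u : List ℕ} (h : u ∈ L0) : σ u ∈ L0 := by
  obtain ⟨n, ⟨k, hk⟩ | ⟨k, hk⟩⟩ := h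
  · exact ⟨n + 1, Or.inl ⟨k, by rw [sigIt, ← sg_powWord]; exact sg_infix hk⟩⟩
  · exact ⟨n + 1, Or.inr ⟨k, by rw [sigIt, ← sg_powWord]; exact sg_infix hk⟩⟩

/-- `L₀` is generated by the factors of `1^ω` and `(12)^ω` under `σ` and taking factors. -/
lemma L0_cases {v : List ℕ} (h : v ∈ L0) :
    IsFactorPer [1] v ∨ IsFactorPer [1, 2] v ∨ ∃ u ∈ L0, v <:+: σ u := by
  obtain ⟨_ | n, ⟨k, hk⟩ | ⟨k, hk⟩⟩ := h
  · exact Or.inl ⟨k, hk⟩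
  · exact Or.inr (Or.inl ⟨k, hk⟩)
  · rw [sigIt, ← sg_powWord] at hk
    exact Or.inr (Or.inr ⟨_, ⟨n, Or.inl ⟨k, List.infix_rfl⟩⟩, hk⟩)
  · rw [sigIt, ← sg_powWord] at hk
    exact Or.inr (Or.inr ⟨_, ⟨n, Or.inr ⟨k, List.infix_rfl⟩⟩, hk⟩)

/-- Induction along the generation of `L₀` by `σ` and taking factors. -/
lemma L0_induction {P : List ℕ → Prop} (h1 : ∀ k, P (powWord [1] k)) (h2 : ∀ k, P (powWord [1, 2] k))
    (hσ : ∀ u, u ∈ L0 → P u → P (σ u)) (hinf : ∀ u v, u <:+: v → P v → P u) {v : List ℕ} (h : v ∈ L0) :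
    P v := by
  have : ∀ n k, P (powWord (sigIt n [1]) k) ∧ P (powWord (sigIt n [1, 2]) k) := by
    intro n k
    induction n with
    | zero => exact ⟨h1 k, h2 k⟩
    | succ n ih =>
      rw [sigIt, sigIt, ← sg_powWord, ← sg_powWord]
      exact ⟨hσ _ ⟨n, Or.inl ⟨k, List.infix_rfl⟩⟩ ih.1, hσ _ ⟨n, Or.inr ⟨k, List.infix_rfl⟩⟩ ih.2⟩
  obtain ⟨n, ⟨k, hk⟩ | ⟨k, hk⟩⟩ := h
  · exact hinf _ _ hk (this n k).1
  · exact hinf _ _ hk (this n k).2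

lemma pow_one_no2 (k : ℕ) : ¬ [2] <:+: powWord [1] k := by
  induction k with
  | zero => simp [powWord]
  | succ k ih => rw [powWord_succ]; simpa [List.infix_cons_iff] using ih

lemma pow_onetwo_no11 (k : ℕ) :
    ¬ [1, 1] <:+: powWord [1, 2] k ∧ ¬ [2, 2] <:+: powWord [1, 2] k := by
  induction k with
  | zero => simp [powWord]
  | succ k ih =>
    rw [powWord_succ]
    rcases k with _ | k
    · simp [powWord, List.infix_cons_iff]
    · rw [powWord_succ] at ih ⊢
      simpa [List.infix_cons_iff] using ih

lemma bin_powWord (w : List ℕ) (hw : Bin w) (k : ℕ) : Bin (powWord w k) := by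
  induction k with
  | zero => simp [powWord, Bin]
  | succ k ih => rw [powWord_succ, bin_append]; exact ⟨hw, ih⟩

lemma sg_no22 (u : List ℕ) (hu : Bin u) : ¬ [2, 2] <:+: σ u := by
  induction u with
  | nil => simp
  | cons a u ih =>
    rw [bin_cons] at hu
    obtain ⟨rfl | rfl, h⟩ := hu <;> simpa [List.infix_cons_iff] using ih h

lemma L0_good {v : List ℕ} (h : v ∈ L0) : Good v := by
  refine L0_induction (P := Good) ?_ ?_ ?_ ?_ h
  · exact fun k => ⟨bin_powWord _ (by simp [Bin]) k,
      fun hh => pow_one_no2 k (List.IsInfix.trans (by decide) hh)⟩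
  · exact fun k => ⟨bin_powWord _ (by simp [Bin]) k, (pow_onetwo_no11 k).2⟩
  · exact fun u _ hu => ⟨sg_bin u hu.1, sg_no22 u hu.1⟩
  · exact fun u v huv hv => ⟨bin_infix huv hv.1, fun hh => hv.2 (hh.trans huv)⟩

lemma L0_reverse {v : List ℕ} (h : v ∈ L0) : v.reverse ∈ L0 := by
  refine L0_induction (P := fun v => v.reverse ∈ L0) ?_ ?_ ?_ ?_ h
  · exact fun k => ⟨0, Or.inl ⟨k, by simp [powWord, sigIt]⟩⟩
  · intro k
    refine ⟨0, Or.inr ⟨k + 1, [1], [2], ?_⟩⟩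
    change _ = powWord [1, 2] (k + 1)
    induction k with
    | zero => rfl
    | succ k ih =>
      rw [powWord_succ [1, 2] k, powWord_succ' [1, 2] (k + 1), ← ih]
      simp
  · intro u hu h'
    rw [← sg_reverse u (L0_good hu).1]
    exact L0_sg h'
  · exact fun u v huv hv => L0_infix (List.reverse_infix.2 huv) hv

lemma sg_ne_nil (u : List ℕ) (hu : Bin u) (h : u ≠ []) : σ u ≠ [] := by
  rcases u with _ | ⟨a, u⟩
  · exact absurd rfl h
  · rw [bin_cons] at hu
    obtain ⟨rfl | rfl, _⟩ := hu <;> simp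

lemma sigIt_ne_nil (n : ℕ) (w : List ℕ) (hw : Bin w) (h : w ≠ []) :
    Bin (sigIt n w) ∧ sigIt n w ≠ [] := by
  induction n with
  | zero => exact ⟨hw, h⟩
  | succ n ih => exact ⟨sg_bin _ ih.1, sg_ne_nil _ ih.1 ih.2⟩

lemma per_right {w v : List ℕ} (hw : w ≠ []) (h : IsFactorPer w v) : ∃ b, IsFactorPer w (v ++ [b]) := by
  obtain ⟨k, s, t, h⟩ := h
  obtain ⟨b, r, hr⟩ := List.exists_cons_of_ne_nil (l := t ++ w) (by simp [hw])
  exact ⟨b, k + 1, s, r, by rw [powWord_succ', ← h]; simp [← hr]⟩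

lemma L0_right {v : List ℕ} (h : v ∈ L0) : ∃ b, v ++ [b] ∈ L0 := by
  obtain ⟨n, h | h⟩ := h
  · obtain ⟨b, hb⟩ := per_right (sigIt_ne_nil n [1] (by simp [Bin]) (by simp)).2 h
    exact ⟨b, n, Or.inl hb⟩
  · obtain ⟨b, hb⟩ := per_right (sigIt_ne_nil n [1, 2] (by simp [Bin]) (by simp)).2 h
    exact ⟨b, n, Or.inr hb⟩

lemma L0_left {v : List ℕ} (h : v ∈ L0) : ∃ a, a :: v ∈ L0 := by
  obtain ⟨b, hb⟩ := L0_right (L0_reverse h)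
  exact ⟨b, by simpa using L0_reverse hb⟩

/-! ### Forbidden words -/

/-- A word containing `2` and `11` can only occur in `L₀` inside an image `σ(u)`. -/
lemma L0_image {f : List ℕ} (h : f ∈ L0) (h2 : [2] <:+: f) (h11 : [1, 1] <:+: f) :
    ∃ u, u ∈ L0 ∧ f <:+: σ u := by
  rcases L0_cases h with ⟨k, h⟩ | ⟨k, h⟩ | ⟨u, hu, h⟩
  · exact absurd (h2.trans h) (pow_one_no2 k)
  · exact absurd (h11.trans h) (pow_onetwo_no11 k).1
  · exact ⟨u, hu, h⟩

/-- Words that do not occur in `L₀`, all containing both `2` and `11`. With `22`, they are the only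
obstructions needed to determine the extensions of short words. -/
def forb : List (List ℕ) :=
  [[2, 1, 1, 2], [2, 1, 1, 1, 2], [2, 1, 1, 1, 1, 1, 2], [2, 1, 1, 1, 1, 1, 1, 2],
    [2, 1, 1, 1, 1, 1, 1, 1, 1], [1, 1, 1, 1, 1, 1, 1, 1, 2], [1, 1, 2, 1, 1], [1, 1, 2, 1, 2, 1, 2],
    [2, 1, 2, 1, 2, 1, 1]]

lemma forb_sg (u : List ℕ) (hu : Good u) (f : List ℕ) (hf : f ∈ forb) : ¬ f <:+: σ u := by
  induction u with
  | nil =>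
    simp only [forb, List.mem_cons, List.not_mem_nil, or_false] at hf
    rcases hf with rfl | rfl | rfl | rfl | rfl | rfl | rfl | rfl | rfl <;> simp
  | cons a u ih =>
    have hg : Good u := ⟨(bin_cons.1 hu.1).2, fun h => hu.2 (h.trans (List.suffix_cons a u).isInfix)⟩
    have ih := ih hg
    have ha := (bin_cons.1 hu.1).1
    have h22 := hu.2
    have hb := hg.1
    clear hu hg
    -- The first two letters of `u` determine the prefixes of `σ u` of the relevant lengths.
    have hs : u = [] ∨ (∃ w, u = 1 :: w) ∨ u = [2] ∨ (∃ w, u = 2 :: 1 :: w) ∨ ∃ w, u = 2 :: 2 :: w := by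
      rcases u with _ | ⟨b, _ | ⟨c, u⟩⟩ <;> (try simp only [bin_cons] at hb) <;> grind
    simp only [forb, List.mem_cons, List.not_mem_nil, or_false] at hf
    rcases hf with rfl | rfl | rfl | rfl | rfl | rfl | rfl | rfl | rfl <;>
    rcases ha with rfl | rfl <;>
    rcases hs with rfl | ⟨w, rfl⟩ | rfl | ⟨w, rfl⟩ | ⟨w, rfl⟩ <;>
    simp_all [List.infix_cons_iff]

lemma not_forb {v : List ℕ} (hv : v ∈ L0) (f : List ℕ) (hf : f ∈ forb) : ¬ f <:+: v := by
  intro h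
  have hfL := L0_infix h hv
  have : [2] <:+: f ∧ [1, 1] <:+: f := by clear h hfL; revert f; decide
  obtain ⟨u, hu, h'⟩ := L0_image hfL this.1 this.2
  exact forb_sg u (L0_good hu) f hf h'

/-! ### Extensions and multiplicities -/

lemma mL_ext (v : List ℕ) : mL L0 v = (Prod.fst '' ext v).ncard := by
  unfold mL
  congr 1
  ext a
  simp only [ext, Set.mem_ofPred_eq, Set.mem_image, Prod.exists, exists_and_right, exists_eq_right]
  refine ⟨fun h => ?_, fun ⟨b, h⟩ => L0_infix ⟨[], [b], by simp⟩ h⟩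
  exact L0_right h

lemma mR_ext (v : List ℕ) : mR L0 v = (Prod.snd '' ext v).ncard := by
  unfold mR
  congr 1
  ext b
  simp only [ext, Set.mem_ofPred_eq, Set.mem_image, Prod.exists, exists_eq_right]
  refine ⟨fun h => ?_, fun ⟨a, h⟩ => L0_infix ⟨[a], [], by simp⟩ h⟩
  exact L0_left h

lemma mB_ext (v : List ℕ) : mB L0 v = (ext v).ncard := rfl

lemma ext_bin {v : List ℕ} {p : ℕ × ℕ} (h : p ∈ ext v) :
    (p.1 = 1 ∨ p.1 = 2) ∧ (p.2 = 1 ∨ p.2 = 2) := by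
  have := (L0_good h).1
  rw [bin_cons, bin_append, bin_cons] at this
  exact ⟨this.1, this.2.2.1⟩

/-- A decidable sufficient condition for membership in `L₀`. -/
def Wit (v : List ℕ) : Prop :=
  v <:+: powWord (sigIt 0 [1]) 9 ∨ v <:+: powWord (sigIt 0 [1, 2]) 4 ∨
    v <:+: powWord (sigIt 1 [1]) 2 ∨ v <:+: powWord (sigIt 1 [1, 2]) 2

instance (v : List ℕ) : Decidable (Wit v) := by unfold Wit; infer_instance

lemma Wit.mem {v : List ℕ} (h : Wit v) : v ∈ L0 := by
  rcases h with h | h | h | h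
  · exact ⟨0, Or.inl ⟨_, h⟩⟩
  · exact ⟨0, Or.inr ⟨_, h⟩⟩
  · exact ⟨1, Or.inl ⟨_, h⟩⟩
  · exact ⟨1, Or.inr ⟨_, h⟩⟩

/-- Reduces the computation of the extensions of a short word to a finite check. -/
lemma ext_eq (v : List ℕ) (s : Finset (ℕ × ℕ))
    (h : s ⊆ {1, 2} ×ˢ {1, 2} ∧ ∀ p ∈ ({1, 2} ×ˢ {1, 2} : Finset (ℕ × ℕ)),
      if p ∈ s then Wit (p.1 :: (v ++ [p.2])) else
        ∃ f ∈ [2, 2] :: forb, f <:+: p.1 :: (v ++ [p.2])) : ext v = s := by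
  ext p
  constructor
  · intro hp
    by_contra hps
    have h' := h.2 p (by have := ext_bin hp; simp; tauto)
    rw [if_neg (by simpa using hps)] at h'
    obtain ⟨f, hf, hfp⟩ := h'
    rcases List.mem_cons.1 hf with rfl | hf
    · exact (L0_good hp).2 hfp
    · exact not_forb hp f hf hfp
  · intro hp
    have h' := h.2 p (h.1 hp)
    rw [if_pos (by simpa using hp)] at h'
    exact h'.mem

lemma counts_of_ext {v : List ℕ} {s : Finset (ℕ × ℕ)} (h : ext v = s) :
    mB L0 v = s.card ∧ mL L0 v = (s.image Prod.fst).card ∧ mR L0 v = (s.image Prod.snd).card := by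
  rw [mB_ext, mL_ext, mR_ext, h, ← Finset.coe_image, ← Finset.coe_image]
  simp only [Set.ncard_coe_finset, and_self]

/-- Numerical data of a strong bispecial word over two letters. -/
def Strong (v : List ℕ) : Prop := mB L0 v = 4 ∧ mL L0 v = 2 ∧ mR L0 v = 2

/-- Numerical data of a neutral bispecial word over two letters. -/
def Neutral (v : List ℕ) : Prop := mB L0 v = 3 ∧ mL L0 v = 2 ∧ mR L0 v = 2

/-- Numerical data of a weak bispecial word over two letters. -/
def Weak (v : List ℕ) : Prop := mB L0 v = 2 ∧ mL L0 v = 2 ∧ mR L0 v = 2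

lemma Neutral.mult {v : List ℕ} (h : Neutral v) : mult L0 v = 0 := by
  obtain ⟨h1, h2, h3⟩ := h
  simp [_root_.mult, h1, h2, h3]

lemma strong_one : Strong [1] :=
  counts_of_ext (ext_eq _ {(1, 1), (1, 2), (2, 1), (2, 2)} (by decide))
lemma strong_four : Strong (List.replicate 4 1) :=
  counts_of_ext (ext_eq _ {(1, 1), (1, 2), (2, 1), (2, 2)} (by decide))
lemma weak_five : Weak [1, 2, 1, 2, 1] :=
  counts_of_ext (ext_eq _ {(1, 1), (2, 2)} (by decide))
lemma weak_seven : Weak (List.replicate 7 1) :=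
  counts_of_ext (ext_eq _ {(1, 1), (2, 2)} (by decide))
lemma neutral_three : Neutral [1, 2, 1] :=
  counts_of_ext (ext_eq _ {(1, 2), (2, 1), (2, 2)} (by decide))
lemma neutral_pow : ∀ k ∈ [0, 2, 3, 5, 6], Neutral (List.replicate k 1) := by
  have h : ∀ k ∈ [0, 2, 3, 5, 6], ext (List.replicate k 1) =
      (({(1, 1), (1, 2), (2, 1)} : Finset (ℕ × ℕ)) : Set (ℕ × ℕ)) := by
    intro k hk
    refine ext_eq _ _ ?_
    revert k
    decide
  exact fun k hk => counts_of_ext (h k hk)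

/-! ### The map `σ̂` preserves extensions -/

/-- Words over `{1,2}` that start and end with `1`. -/
def Core (w : List ℕ) : Prop := Bin w ∧ (∃ z, w = 1 :: z) ∧ ∃ z, w = z ++ [1]

lemma core_sigHat {w : List ℕ} (h : Core w) : Core (sigHat w) := by
  refine ⟨?_, ⟨1 :: (σ w ++ [1, 1]), by simp [sigHat]⟩, ⟨[1, 1] ++ σ w ++ [1], by simp [sigHat]⟩⟩
  rw [sigHat, bin_append, bin_append]
  exact ⟨⟨by simp [Bin], sg_bin w h.1⟩, by simp [Bin]⟩

lemma core_it {w : List ℕ} (h : Core w) (n : ℕ) : Core (sigHatIt n w) := by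
  induction n with
  | zero => exact h
  | succ n ih => exact core_sigHat ih

/-- `σ̂` exchanges the letters `1` and `2` in the two-sided extensions. -/
lemma ext_sigHat {w : List ℕ} (h : Core w) :
    ext (sigHat w) = (fun p : ℕ × ℕ => (3 - p.1, 3 - p.2)) '' ext w := by
  obtain ⟨hb, ⟨z, hz⟩, ⟨z', hz'⟩⟩ := h
  have e1 : σ w = 1 :: 1 :: 2 :: (1 :: 2 :: 1 :: 1 :: σ z) := by rw [hz]; rfl
  have e2 : σ w = (σ z' ++ [1, 1, 2, 1]) ++ [2, 1, 1] := by rw [hz', sg_append]; simp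
  ext ⟨x, y⟩
  constructor
  · intro hp
    have hp : x :: (1 :: 1 :: σ w ++ [1, 1] ++ [y]) ∈ L0 := hp
    obtain ⟨u, hu, s, t, hst⟩ := L0_image hp
      ⟨x :: 1 :: 1 :: 1 :: 1 :: [], 1 :: 2 :: 1 :: 1 :: σ z ++ [1, 1, y], by simp [e1]⟩
      ⟨[x], σ w ++ [1, 1, y], by simp⟩
    obtain ⟨a, w', b, hi, hw, hx, hy⟩ := desubst u s t (σ w) _ _ x y (L0_good hu).1 hst.symm e1 e2
    have hL := L0_infix hi hu
    have hbw : Bin w' := bin_infix ⟨[a], [b], by simp⟩ (L0_good hL).1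
    rw [sg_inj w' w hbw hb hw] at hL
    exact ⟨(a, b), hL, by simp [hx, hy]⟩
  · rintro ⟨⟨a, b⟩, hab, he⟩
    obtain ⟨rfl, rfl⟩ := Prod.mk.inj he
    obtain ⟨ha, hb'⟩ := ext_bin hab
    refine L0_infix ?_ (L0_sg (u := a :: (w ++ [b])) hab)
    simp only at ha hb'
    rcases ha with rfl | rfl <;> rcases hb' with rfl | rfl
    · exact ⟨[1, 1, 2, 1], [1, 2, 1, 1], by simp [sigHat]⟩
    · exact ⟨[1, 1, 2, 1], [], by simp [sigHat]⟩
    · exact ⟨[], [1, 2, 1, 1], by simp [sigHat]⟩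
    · exact ⟨[], [], by simp [sigHat]⟩

/-- The numbers of extensions are unchanged, because `a ↦ 3 - a` is injective on `{1,2}`. -/
lemma counts_sigHat {w : List ℕ} (h : Core w) :
    mB L0 (sigHat w) = mB L0 w ∧ mL L0 (sigHat w) = mL L0 w ∧ mR L0 (sigHat w) = mR L0 w := by
  simp only [mB_ext, mL_ext, mR_ext, ext_sigHat h]
  refine ⟨?_, ?_, ?_⟩
  · refine Set.InjOn.ncard_image ?_
    rintro ⟨a, b⟩ hp ⟨c, d⟩ hq he
    have := ext_bin hp
    have := ext_bin hq
    simp only [Prod.mk.injEq] at *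
    omega
  · rw [Set.image_image, ← Set.image_image (fun a => 3 - a) Prod.fst]
    refine Set.InjOn.ncard_image ?_
    rintro _ ⟨p, hp, rfl⟩ _ ⟨q, hq, rfl⟩ he
    have := ext_bin hp
    have := ext_bin hq
    simp only at he
    omega
  · rw [Set.image_image, ← Set.image_image (fun a => 3 - a) Prod.snd]
    refine Set.InjOn.ncard_image ?_
    rintro _ ⟨p, hp, rfl⟩ _ ⟨q, hq, rfl⟩ he
    have := ext_bin hp
    have := ext_bin hq
    simp only at he
    omega

lemma counts_it {w : List ℕ} (h : Core w) (n : ℕ) :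
    mB L0 (sigHatIt n w) = mB L0 w ∧ mL L0 (sigHatIt n w) = mL L0 w ∧
      mR L0 (sigHatIt n w) = mR L0 w := by
  induction n with
  | zero => exact ⟨rfl, rfl, rfl⟩
  | succ n ih =>
    obtain ⟨h1, h2, h3⟩ := counts_sigHat (core_it h n)
    exact ⟨h1.trans ih.1, h2.trans ih.2.1, h3.trans ih.2.2⟩

lemma bispecial_iff {v : List ℕ} : Bispecial L0 v ↔ 2 ≤ mL L0 v ∧ 2 ≤ mR L0 v := by
  refine ⟨fun h => h.2, fun h => ⟨?_, h⟩⟩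
  obtain ⟨a, ha⟩ := Set.nonempty_of_ncard_ne_zero (s := {a : ℕ | a :: v ∈ L0})
    (by have := h.1; unfold mL at this; omega)
  exact L0_infix (List.suffix_cons a v).isInfix ha

/-! ### Classification of bispecial words -/

lemma bispecial_letters {v : List ℕ} (h : Bispecial L0 v) :
    1 :: v ∈ L0 ∧ 2 :: v ∈ L0 ∧ v ++ [1] ∈ L0 ∧ v ++ [2] ∈ L0 := by
  have hl : {a : ℕ | a :: v ∈ L0} = {1, 2} := by
    refine Set.eq_of_subset_of_ncard_le ?_ ?_
    · intro a ha
      simpa using (bin_cons.1 (L0_good ha).1).1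
    · rw [Set.ncard_pair (by norm_num)]; exact h.2.1
  have hr : {b : ℕ | v ++ [b] ∈ L0} = {1, 2} := by
    refine Set.eq_of_subset_of_ncard_le ?_ ?_
    · intro a ha
      simpa using (bin_cons.1 (bin_append.1 (L0_good ha).1).2).1
    · rw [Set.ncard_pair (by norm_num)]; exact h.2.2
  simp only [Set.ext_iff, Set.mem_ofPred_eq, Set.mem_insert_iff, Set.mem_singleton_iff] at hl hr
  exact ⟨(hl 1).2 (by simp), (hl 2).2 (by simp), (hr 1).2 (by simp), (hr 2).2 (by simp)⟩

lemma split_ones (v : List ℕ) (hv : Bin v) :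
    (∃ k, v = List.replicate k 1) ∨ ∃ k t, v = List.replicate k 1 ++ 2 :: t := by
  induction v with
  | nil => exact Or.inl ⟨0, rfl⟩
  | cons a v ih =>
    rw [bin_cons] at hv
    obtain ⟨rfl | rfl, hv⟩ := hv
    · rcases ih hv with ⟨k, rfl⟩ | ⟨k, t, rfl⟩
      · exact Or.inl ⟨k + 1, rfl⟩
      · exact Or.inr ⟨k + 1, t, rfl⟩
    · exact Or.inr ⟨0, v, rfl⟩

/-- A left special word containing `2` starts with a run of `1` of length one or four. -/
lemma left_run {v : List ℕ} (h1 : 1 :: v ∈ L0) (h2 : 2 :: v ∈ L0) (hv : 2 ∈ v) :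
    (∃ t, v = 1 :: 2 :: t) ∨ ∃ t, v = 1 :: 1 :: 1 :: 1 :: 2 :: t := by
  rcases split_ones v (bin_cons.1 (L0_good h1).1).2 with ⟨k, rfl⟩ | ⟨k, t, rfl⟩
  · simp at hv
  · by_cases hk : k < 8
    · interval_cases k
      · exact absurd ⟨[], t, rfl⟩ (L0_good h2).2
      · exact Or.inl ⟨t, rfl⟩
      · exact absurd ⟨[], t, rfl⟩ (not_forb h2 [2, 1, 1, 2] (by decide))
      · exact absurd ⟨[], t, rfl⟩ (not_forb h2 [2, 1, 1, 1, 2] (by decide))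
      · exact Or.inr ⟨t, rfl⟩
      · exact absurd ⟨[], t, rfl⟩ (not_forb h2 [2, 1, 1, 1, 1, 1, 2] (by decide))
      · exact absurd ⟨[], t, rfl⟩ (not_forb h2 [2, 1, 1, 1, 1, 1, 1, 2] (by decide))
      · exact absurd ⟨[], t, rfl⟩ (not_forb h1 [1, 1, 1, 1, 1, 1, 1, 1, 2] (by decide))
    · obtain ⟨j, rfl⟩ := Nat.exists_eq_add_of_le (not_lt.1 hk)
      refine absurd ⟨[], List.replicate j 1 ++ 2 :: t, ?_⟩
        (not_forb h2 [2, 1, 1, 1, 1, 1, 1, 1, 1] (by decide))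
      rw [List.replicate_add]
      rfl

/-- The bispecial words starting with `12`. -/
lemma short_run {t : List ℕ} (h1 : 1 :: 1 :: 2 :: t ∈ L0) (h2 : 2 :: 1 :: 2 :: t ∈ L0)
    (h3 : 1 :: 2 :: t ++ [2] ∈ L0) : t = [1] ∨ t = [1, 2, 1] := by
  have g1 := L0_good h1
  have g3 := L0_good h3
  have f1 := not_forb h1 [1, 1, 2, 1, 1] (by decide)
  have f2 := not_forb h1 [1, 1, 2, 1, 2, 1, 2] (by decide)
  have f3 := not_forb h2 [2, 1, 2, 1, 2, 1, 1] (by decide)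
  obtain ⟨hb, h22⟩ := g1
  have h22' := g3.2
  clear h1 h2 h3 g3
  rcases t with _ | ⟨a, _ | ⟨b, _ | ⟨c, _ | ⟨d, t⟩⟩⟩⟩ <;> simp only [bin_cons] at hb <;>
    simp [List.infix_cons_iff] at h22 h22' f1 f2 f3 <;> grind

/-- A bispecial word containing `2` either is one of two short words, whose border runs of `1` have
length one, or it has the form `1111 2 ... 2 1111`, and then it can be desubstituted. -/
lemma classify {v : List ℕ} (h : Bispecial L0 v) (h2 : 2 ∈ v) :
    v = [1, 2, 1] ∨ v = [1, 2, 1, 2, 1] ∨ ∃ w, Core w ∧ v = sigHat w := by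
  obtain ⟨l1, l2, r1, r2⟩ := bispecial_letters h
  have r1' : 1 :: v.reverse ∈ L0 := by simpa using L0_reverse r1
  have r2' : 2 :: v.reverse ∈ L0 := by simpa using L0_reverse r2
  have l2' : v.reverse ++ [2] ∈ L0 := by simpa using L0_reverse l2
  rcases left_run l1 l2 h2 with ⟨t, rfl⟩ | ⟨t, ht⟩
  · rcases short_run l1 l2 r2 with rfl | rfl <;> simp
  rcases left_run r1' r2' (by simpa using h2) with ⟨t', ht'⟩ | ⟨t', ht'⟩
  · rw [ht'] at r1' r2' l2'
    have hv : v = (1 :: 2 :: t').reverse := by rw [← ht', List.reverse_reverse]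
    rcases short_run r1' r2' l2' with rfl | rfl
    · exact Or.inl (by rw [hv]; rfl)
    · exact Or.inr (Or.inl (by rw [hv]; rfl))
  refine Or.inr (Or.inr ?_)
  have hv : v = t'.reverse ++ [2, 1, 1, 1, 1] := by
    rw [← List.reverse_reverse v, ht']; simp
  -- Stripping `11` on both sides leaves a word `m` starting with `112` and ending with `211`.
  obtain ⟨m, z, z', hvm, hm, hm'⟩ : ∃ m z z', v = 1 :: 1 :: m ++ [1, 1] ∧ m = 1 :: 1 :: 2 :: z ∧
      m = z' ++ [2, 1, 1] := by
    rcases List.append_eq_append_iff.1 (show [1, 1, 1, 1, 2] ++ t = t'.reverse ++ [2, 1, 1, 1, 1]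
      by rw [← hv, ht]; rfl) with ⟨c, hc, hc'⟩ | ⟨c, hc, hc'⟩
    · exact ⟨1 :: 1 :: 2 :: (c ++ [2, 1, 1]), _, 1 :: 1 :: 2 :: c, by simp [hv, hc], rfl, by simp⟩
      -- The prefix `11112` and the suffix `21111` are adjacent or share their letter `2`.
    · generalize t'.reverse = r at *
      rcases c with _ | ⟨c1, c⟩
      · simp at hc hc'
        subst hc'
        exact ⟨[1, 1, 2, 2, 1, 1], _, [1, 1, 2], by simp [ht], rfl, by simp⟩
      · rcases r with _ | ⟨_, _ | ⟨_, _ | ⟨_, _ | ⟨_, _ | ⟨_, r⟩⟩⟩⟩⟩ <;> simp at hc <;> try grind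
        obtain ⟨rfl, rfl, rfl, rfl, rfl, rfl⟩ := hc
        exact ⟨[1, 1, 2, 1, 1], _, [1, 1], by simp [hv], rfl, by simp⟩
  obtain ⟨y, hy⟩ := L0_right l1
  rw [List.cons_append, hvm] at hy
  obtain ⟨u, hu, s, t, hst⟩ := L0_image hy
      ⟨1 :: 1 :: 1 :: 1 :: 1 :: [], z ++ [1, 1, y], by simp [hm]⟩
      ⟨[1], m ++ [1, 1, y], by simp⟩
  obtain ⟨a, w, b, hi, hw, -, -⟩ := desubst u s t m z z' 1 y (L0_good hu).1 hst.symm hm hm'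
  have hbw : Bin w := bin_infix ((show w <:+: a :: (w ++ [b]) from ⟨[a], [b], by simp⟩).trans hi)
    (L0_good hu).1
  have hnil : ∀ x, Bin x → σ x = [] → x = [] := fun x hx h => by
    by_contra hne
    exact sg_ne_nil x hx hne h
  refine ⟨w, ⟨hbw, ?_, ?_⟩, by rw [hvm, sigHat, hw]; rfl⟩
  · obtain ⟨u1, u2, rfl, h4⟩ := dec112 w [] z hbw (by rw [hw, hm]; rfl)
    rw [hnil u1 (bin_append.1 hbw).1 h4]
    exact ⟨u2, rfl⟩
  · obtain ⟨u1, u2, rfl, h4⟩ := dec211 w z' [] hbw (by rw [hw, hm'])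
    rw [hnil u2 (bin_cons.1 (bin_append.1 hbw).2).2 h4]
    exact ⟨u1, rfl⟩

/-- By induction on the length: a bispecial `σ̂(w)` has the multiplicity of the shorter word `w`. -/
lemma nonneutral_cases (v : List ℕ) (h : Bispecial L0 v) (hm : mult L0 v ≠ 0) :
    ∃ n : ℕ, v = sigHatIt n [1] ∨ v = sigHatIt n (List.replicate 4 1) ∨
      v = sigHatIt n [1, 2, 1, 2, 1] ∨ v = sigHatIt n (List.replicate 7 1) := by
  induction hn : v.length using Nat.strong_induction_on generalizing v with
  | _ N ih =>
  by_cases h2 : 2 ∈ v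
  · rcases classify h h2 with rfl | rfl | ⟨w, hw, rfl⟩
    · exact absurd neutral_three.mult hm
    · exact ⟨0, by simp [sigHatIt]⟩
    · obtain ⟨c1, c2, c3⟩ := counts_sigHat hw
      have hmw : mult L0 w = mult L0 (sigHat w) := by rw [mult, mult, c1, c2, c3]
      have hbw : Bispecial L0 w := by
        rw [bispecial_iff] at h ⊢
        rwa [c2, c3] at h
      have hlen : w.length ≤ (σ w).length := by
        clear * - hw
        have hb := hw.1
        clear hw
        induction w with
        | nil => simp
        | cons a w ih =>
          rw [bin_cons] at hb
          obtain ⟨rfl | rfl, hb⟩ := hb <;> have := ih hb <;> simp <;> omega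
      obtain ⟨n, hn⟩ := ih w.length (by rw [← hn]; simp [sigHat]; omega) w hbw (hmw ▸ hm) rfl
      refine ⟨n + 1, ?_⟩
      rcases hn with rfl | rfl | rfl | rfl <;> simp [sigHatIt]
  · rcases split_ones v (L0_good h.1).1 with ⟨k, rfl⟩ | ⟨k, t, rfl⟩
    · have hk : k < 8 := by
        by_contra hk
        obtain ⟨j, rfl⟩ := Nat.exists_eq_add_of_le (not_lt.1 hk)
        refine not_forb (bispecial_letters h).2.2.2 [1, 1, 1, 1, 1, 1, 1, 1, 2] (by decide)
          ⟨List.replicate j 1, [], ?_⟩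
        rw [add_comm, List.replicate_add]
        simp [List.replicate]
      have hne : k ∉ [0, 2, 3, 5, 6] := fun hk => hm (neutral_pow k hk).mult
      refine ⟨0, ?_⟩
      clear ih hn
      interval_cases k <;> simp_all [sigHatIt]
    · simp at h2

/-- The bispecial words of `L₀` with nonzero multiplicity are exactly the four families
`σ̂ⁿ(1)`, `σ̂ⁿ(1111)` (with multiplicity `1`) and `σ̂ⁿ(12121)`, `σ̂ⁿ(1111111)`
(with multiplicity `-1`). -/
theorem nonneutral_bispecial_L0 :
    (∀ v : List ℕ, (Bispecial L0 v ∧ mult L0 v ≠ 0) ↔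
      ∃ n : ℕ, v = sigHatIt n [1] ∨ v = sigHatIt n (List.replicate 4 1) ∨
        v = sigHatIt n [1, 2, 1, 2, 1] ∨ v = sigHatIt n (List.replicate 7 1)) ∧
    (∀ n : ℕ,
      mult L0 (sigHatIt n [1]) = 1 ∧
      mult L0 (sigHatIt n (List.replicate 4 1)) = 1 ∧
      mult L0 (sigHatIt n [1, 2, 1, 2, 1]) = -1 ∧
      mult L0 (sigHatIt n (List.replicate 7 1)) = -1) := by
  have c1 : Core [1] := ⟨by simp [Bin], ⟨[], rfl⟩, ⟨[], rfl⟩⟩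
  have c4 : Core (List.replicate 4 1) := ⟨by simp [Bin], ⟨[1, 1, 1], rfl⟩, ⟨[1, 1, 1], rfl⟩⟩
  have c5 : Core [1, 2, 1, 2, 1] := ⟨by simp [Bin], ⟨[2, 1, 2, 1], rfl⟩, ⟨[1, 2, 1, 2], rfl⟩⟩
  have c7 : Core (List.replicate 7 1) :=
    ⟨by simp [Bin], ⟨[1, 1, 1, 1, 1, 1], rfl⟩, ⟨[1, 1, 1, 1, 1, 1], rfl⟩⟩
  have strong : ∀ {w}, Core w → Strong w → ∀ n,
      Bispecial L0 (sigHatIt n w) ∧ mult L0 (sigHatIt n w) = 1 := by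
    rintro w hw ⟨e1, e2, e3⟩ n
    obtain ⟨h1, h2, h3⟩ := counts_it hw n
    rw [bispecial_iff, mult, h1, h2, h3, e1, e2, e3]
    norm_num
  have weak : ∀ {w}, Core w → Weak w → ∀ n,
      Bispecial L0 (sigHatIt n w) ∧ mult L0 (sigHatIt n w) = -1 := by
    rintro w hw ⟨e1, e2, e3⟩ n
    obtain ⟨h1, h2, h3⟩ := counts_it hw n
    rw [bispecial_iff, mult, h1, h2, h3, e1, e2, e3]
    norm_num
  refine ⟨fun v => ⟨fun h => nonneutral_cases v h.1 h.2, ?_⟩, fun n =>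
    ⟨(strong c1 strong_one n).2, (strong c4 strong_four n).2, (weak c5 weak_five n).2,
      (weak c7 weak_seven n).2⟩⟩
  rintro ⟨n, rfl | rfl | rfl | rfl⟩
  · exact ⟨(strong c1 strong_one n).1, by rw [(strong c1 strong_one n).2]; norm_num⟩
  · exact ⟨(strong c4 strong_four n).1, by rw [(strong c4 strong_four n).2]; norm_num⟩
  · exact ⟨(weak c5 weak_five n).1, by rw [(weak c5 weak_five n).2]; norm_num⟩
  · exact ⟨(weak c7 weak_seven n).1, by rw [(weak c7 weak_seven n).2]; norm_num⟩
end

section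
/- Every bispecial word w of the language L₂ satisfies one of the following: either w is a factor of the word 23232, or w = 23232·β̃(v) where v is a nonempty bispecial word of the language L₀. -/
/-- The substitution `β̃ : 1 ↦ 23232, 2 ↦ 32` from words over `{1,2}` to words over `{2,3}`. -/
def betaT (a : ℕ) : List ℕ :=
  if a = 1 then [2, 3, 2, 3, 2] else if a = 2 then [3, 2] else [a]

/-- `L₂`: the factors of the words `β̃(v)` with `v ∈ L₀`. -/
def L2 : Set (List ℕ) := {v | ∃ u ∈ L0, v <:+: substW betaT u}

/-- Words over `{1,2}` without the factor `22`. -/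
def Adm (u : List ℕ) : Prop := (∀ a ∈ u, a = 1 ∨ a = 2) ∧ ¬ [2, 2] <:+: u

/-- Concatenations of copies of `1` and `12`. This class is closed under concatenation, unlike
`Adm`, and contains the periods that define `L₀`. -/
inductive Blocks : List ℕ → Prop
  | nil : Blocks []
  | one {w : List ℕ} : Blocks w → Blocks (1 :: w)
  | two {w : List ℕ} : Blocks w → Blocks (1 :: 2 :: w)

/-! ### The language `L₀` -/

lemma Blocks.append {x y : List ℕ} (hx : Blocks x) (hy : Blocks y) : Blocks (x ++ y) := by
  induction hx with
  | nil => simpa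
  | one _ ih => exact ih.one
  | two _ ih => exact ih.two

lemma Blocks.pow {x : List ℕ} (hx : Blocks x) (k : ℕ) : Blocks (powWord x k) := by
  induction k with
  | zero => exact .nil
  | succ k ih => simpa [powWord, List.replicate_succ] using hx.append ih

lemma Blocks.letters {x : List ℕ} (hx : Blocks x) : ∀ a ∈ x, a = 1 ∨ a = 2 := by
  induction hx <;> simp_all

lemma Blocks.adm {x : List ℕ} (hx : Blocks x) : Adm x := by
  refine ⟨hx.letters, ?_⟩
  induction hx <;> simp_all [List.infix_cons_iff]
  rename_i h _
  cases h <;> simp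

lemma Blocks.subst {x : List ℕ} (hx : ∀ a ∈ x, a = 1 ∨ a = 2) : Blocks (substW sigma0 x) := by
  induction x with
  | nil => exact .nil
  | cons a x ih =>
    have h2 := ih fun b hb => hx b (List.mem_cons_of_mem _ hb)
    rcases hx a List.mem_cons_self with rfl | rfl
    · exact h2.one.one.two.two.one
    · exact h2.one.one.one

lemma Blocks.sigIt {x : List ℕ} (hx : Blocks x) (n : ℕ) : Blocks (sigIt n x) := by
  induction n with
  | zero => exact hx
  | succ n ih => exact Blocks.subst ih.letters

lemma Adm.factor {x y : List ℕ} (h : Adm x) (hy : y <:+: x) : Adm y :=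
  ⟨fun a ha => h.1 a (hy.subset ha), fun h' => h.2 (h'.trans hy)⟩

lemma L0_adm {u : List ℕ} (hu : u ∈ L0) : Adm u := by
  obtain ⟨n, ⟨k, h⟩ | ⟨k, h⟩⟩ := hu
  · exact ((Blocks.nil.one.sigIt n).pow k).adm.factor h
  · exact ((Blocks.nil.two.sigIt n).pow k).adm.factor h

lemma L0_factor {u v : List ℕ} (hu : u ∈ L0) (h : v <:+: u) : v ∈ L0 := by
  obtain ⟨n, ⟨k, hk⟩ | ⟨k, hk⟩⟩ := hu
  · exact ⟨n, .inl ⟨k, h.trans hk⟩⟩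
  · exact ⟨n, .inr ⟨k, h.trans hk⟩⟩

/-! ### Decoding `β̃` -/

@[simp] lemma beta_nil : substW betaT [] = [] := rfl

@[simp] lemma beta_one (u : List ℕ) :
    substW betaT (1 :: u) = 2 :: 3 :: 2 :: 3 :: 2 :: substW betaT u := rfl

@[simp] lemma beta_two (u : List ℕ) : substW betaT (2 :: u) = 3 :: 2 :: substW betaT u := rfl

@[simp] lemma beta_append (u v : List ℕ) :
    substW betaT (u ++ v) = substW betaT u ++ substW betaT v := by
  simp [substW]

/-- Case analysis on the first letter of a word over `{1,2}`. -/
lemma Adm.cases {u : List ℕ} (h : Adm u) :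
    u = [] ∨ (∃ t, u = 1 :: t ∧ Adm t) ∨ (∃ t, u = 2 :: t ∧ Adm t) := by
  rcases u with _ | ⟨a, t⟩
  · simp
  · have ht := h.factor (List.suffix_cons a t).isInfix
    rcases h.1 a List.mem_cons_self with rfl | rfl
    · exact .inr (.inl ⟨t, rfl, ht⟩)
    · exact .inr (.inr ⟨t, rfl, ht⟩)

/-- An occurrence of `22` in `β̃(u)` straddles the boundary between two blocks. -/
lemma sync (u : List ℕ) (hu : Adm u) (x y : List ℕ) (h : substW betaT u = x ++ 2 :: 2 :: y) :
    ∃ p s, u = p ++ s ∧ substW betaT p = x ++ [2] ∧ substW betaT s = 2 :: y := by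
  induction u generalizing x with
  | nil => simp at h
  | cons c u ih =>
    have hu' := hu.factor (List.suffix_cons c u).isInfix
    rcases hu.1 c List.mem_cons_self with rfl | rfl
    · rcases x with _ | ⟨x1, _ | ⟨x2, _ | ⟨x3, _ | ⟨x4, _ | ⟨x5, x⟩⟩⟩⟩⟩ <;> simp at h
      · obtain ⟨rfl, rfl, rfl, rfl, h⟩ := h
        exact ⟨[1], u, rfl, rfl, h⟩
      · obtain ⟨rfl, rfl, rfl, rfl, rfl, h⟩ := h
        obtain ⟨p, s, rfl, hp, hs⟩ := ih hu' x h
        exact ⟨1 :: p, s, rfl, by simp [hp], hs⟩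
    · rcases x with _ | ⟨x1, _ | ⟨x2, x⟩⟩ <;> simp at h
      · obtain ⟨rfl, h⟩ := h
        exact ⟨[2], u, rfl, rfl, h⟩
      · obtain ⟨rfl, rfl, h⟩ := h
        obtain ⟨p, s, rfl, hp, hs⟩ := ih hu' x h
        exact ⟨2 :: p, s, rfl, by simp [hp], hs⟩

/-- `β̃` is a prefix code: its two blocks start with different letters. -/
lemma prefix_code (v s z : List ℕ) (hv : Adm v) (hs : Adm s)
    (h : substW betaT s = substW betaT v ++ z) :
    ∃ r, s = v ++ r ∧ substW betaT r = z := by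
  induction v generalizing s with
  | nil => exact ⟨s, rfl, h⟩
  | cons c v ih =>
    have hv' := hv.factor (List.suffix_cons c v).isInfix
    rcases hv.1 c List.mem_cons_self with rfl | rfl <;>
    obtain rfl | ⟨t, rfl, ht⟩ | ⟨t, rfl, ht⟩ := hs.cases <;> simp at h
    · obtain ⟨r, rfl, hr⟩ := ih t hv' ht h
      exact ⟨r, rfl, hr⟩
    · obtain ⟨r, rfl, hr⟩ := ih t hv' ht h
      exact ⟨r, rfl, hr⟩

lemma no33 (u : List ℕ) (hu : Adm u) : ¬ [3, 3] <:+: substW betaT u := by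
  induction u with
  | nil => simp
  | cons c u ih =>
    have hu' := hu.factor (List.suffix_cons c u).isInfix
    have := ih hu'
    rcases hu.1 c List.mem_cons_self with rfl | rfl <;> simp [List.infix_cons_iff, this]

/-- As `22` is forbidden in `u`, an alternating factor of `β̃(u)` is contained in `β̃(1)`, `β̃(2)` or
`β̃(12) = 2323232`. -/
lemma no_long (u : List ℕ) (hu : Adm u) : ¬ [3, 2, 3, 2, 3, 2, 3, 2] <:+: substW betaT u := by
  induction u with
  | nil => simp
  | cons c u ih =>
    have hu' := hu.factor (List.suffix_cons c u).isInfix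
    have := ih hu'
    rcases hu.1 c List.mem_cons_self with rfl | rfl <;>
    obtain rfl | ⟨t, rfl, ht⟩ | ⟨t, rfl, ht⟩ := hu'.cases
    · simp [List.infix_cons_iff]
    · rw [beta_one, List.infix_cons_iff, List.infix_cons_iff, List.infix_cons_iff,
        List.infix_cons_iff, List.infix_cons_iff]
      simp [this, -beta_one]
      simp
    · obtain rfl | ⟨t', rfl, ht'⟩ | ⟨t', rfl, ht'⟩ := ht.cases
      · simp [List.infix_cons_iff]
      · rw [beta_one, List.infix_cons_iff, List.infix_cons_iff, List.infix_cons_iff,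
          List.infix_cons_iff, List.infix_cons_iff]
        simp [this, -beta_one, -beta_two]
        simp
      · exact absurd (List.prefix_append [2, 2] t').isInfix hu'.2
    · simp [List.infix_cons_iff]
    · rw [beta_two, List.infix_cons_iff, List.infix_cons_iff]
      simp [this, -beta_one]
      simp
    · exact absurd (List.prefix_append [2, 2] t).isInfix hu.2

/-! ### The language `L₂` -/

lemma L2_unfold {w : List ℕ} (hw : w ∈ L2) :
    ∃ u x y, u ∈ L0 ∧ substW betaT u = x ++ w ++ y := by
  obtain ⟨u, hu, x, y, h⟩ := hw
  exact ⟨u, x, y, hu, h.symm⟩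

lemma L2_no33 {w : List ℕ} (hw : w ∈ L2) : ¬ [3, 3] <:+: w := by
  obtain ⟨u, hu, h⟩ := hw
  exact fun h' => no33 u (L0_adm hu) (h'.trans h)

lemma L2_no_long {w : List ℕ} (hw : w ∈ L2) : ¬ [3, 2, 3, 2, 3, 2, 3, 2] <:+: w := by
  obtain ⟨u, hu, h⟩ := hw
  exact fun h' => no_long u (L0_adm hu) (h'.trans h)

lemma L2_letters {w : List ℕ} (hw : w ∈ L2) : ∀ a ∈ w, a = 2 ∨ a = 3 := by
  obtain ⟨u, hu, h⟩ := hw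
  intro a ha
  obtain ⟨b, hb, hab⟩ := List.mem_flatMap.1 (h.subset ha)
  rcases (L0_adm hu).1 b hb with rfl | rfl <;> simp [betaT] at hab <;> omega

/-- A set of letters contained in `{a, b}` that has at least two elements contains both. -/
lemma both_mem {S : Set ℕ} {a b : ℕ} (hS : ∀ x ∈ S, x = a ∨ x = b) (hab : a ≠ b)
    (h : 2 ≤ S.ncard) : a ∈ S ∧ b ∈ S := by
  have hsub : S ⊆ {a, b} := fun x hx => by simpa using hS x hx
  have : S = {a, b} :=
    Set.eq_of_subset_of_ncard_le hsub (by rw [Set.ncard_pair hab]; exact h) (Set.toFinite _)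
  simp [this]

lemma bispecial_L0_of {v : List ℕ} (h1 : 1 :: v ∈ L0) (h2 : 2 :: v ∈ L0) (h3 : v ++ [1] ∈ L0)
    (h4 : v ++ [2] ∈ L0) : Bispecial L0 v := by
  refine ⟨L0_factor h1 (List.suffix_cons 1 v).isInfix, ?_, ?_⟩
  · have : {a : ℕ | a :: v ∈ L0} = {1, 2} := by
      ext a
      simp only [Set.mem_ofPred_eq, Set.mem_insert_iff, Set.mem_singleton_iff]
      refine ⟨fun h => (L0_adm h).1 a (by simp), ?_⟩
      rintro (rfl | rfl) <;> assumption
    rw [mL, this, Set.ncard_pair (by norm_num)]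
  · have : {a : ℕ | v ++ [a] ∈ L0} = {1, 2} := by
      ext a
      simp only [Set.mem_ofPred_eq, Set.mem_insert_iff, Set.mem_singleton_iff]
      refine ⟨fun h => (L0_adm h).1 a (by simp), ?_⟩
      rintro (rfl | rfl) <;> assumption
    rw [mR, this, Set.ncard_pair (by norm_num)]

/-- Decoding a word `x·23232·β̃(v)·y` of `L₂`, where `β̃(v)` starts with `2`: the resulting `22` after
`23232` marks a boundary between blocks, from which `v` can be read off, so that `x·23232` ends the
image of what precedes `v` and `y` starts the image of what follows it. -/
lemma decode {x y v b : List ℕ} (hv : Adm v) (hb : substW betaT v = 2 :: b)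
    (h : x ++ [2, 3, 2, 3, 2] ++ substW betaT v ++ y ∈ L2) :
    ∃ p r x' y', p ++ v ++ r ∈ L0 ∧ substW betaT p = x' ++ x ++ [2, 3, 2, 3, 2] ∧
      substW betaT r = y ++ y' := by
  obtain ⟨u, X, Y, hu, e⟩ := L2_unfold h
  obtain ⟨p, s, rfl, hp, hs⟩ := sync u (L0_adm hu) (X ++ x ++ [2, 3, 2, 3]) (b ++ y ++ Y)
    (by rw [e, hb]; simp)
  have hs' := (L0_adm hu).factor (List.suffix_append p s).isInfix
  obtain ⟨r, rfl, hr⟩ := prefix_code v s (y ++ Y) hv hs' (by rw [hs, hb]; simp)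
  exact ⟨p, r, X, Y, by simpa using hu, by simp [hp], hr⟩

/-- If `β̃(p)` ends with `3·23232`, then `p` ends with `2`: a last block `β̃(1) = 23232` would be
preceded by a block, and every block ends with `2`. -/
lemma last_two {p x : List ℕ} (hp : Adm p)
    (h : substW betaT p = x ++ [3] ++ [2, 3, 2, 3, 2]) : ∃ q, p = q ++ [2] := by
  obtain rfl | ⟨q, c, rfl⟩ := p.eq_nil_or_concat'
  · simp at h
  rcases hp.1 c (by simp) with rfl | rfl
  · exfalso
    have h1 : substW betaT q = x ++ [3] := by
      rw [beta_append] at h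
      exact List.append_cancel_right h
    obtain rfl | ⟨q, c, rfl⟩ := q.eq_nil_or_concat'
    · simp at h1
    have h2 := congrArg List.getLast? h1
    rcases hp.1 c (by simp) with rfl | rfl <;> simp [beta_append] at h2
  · exact ⟨q, rfl⟩

/-! ### Bispecial words of `L₂` -/

/-- Every bispecial word of `L₂` is either a factor of `23232`, or of the form
`23232·β̃(v)` with `v` a nonempty bispecial word of `L₀`. -/
theorem bispecial_L2 (w : List ℕ) (hw : Bispecial L2 w) :
    w <:+: [2, 3, 2, 3, 2] ∨
    ∃ v : List ℕ, Bispecial L0 v ∧ v ≠ [] ∧ w = [2, 3, 2, 3, 2] ++ substW betaT v := by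
  obtain ⟨-, hl, hr⟩ := hw
  obtain ⟨l2, l3⟩ := both_mem (S := {a | a :: w ∈ L2}) (a := 2) (b := 3)
    (fun x hx => L2_letters hx x (by simp)) (by norm_num) hl
  obtain ⟨r2, r3⟩ := both_mem (S := {a | w ++ [a] ∈ L2}) (a := 2) (b := 3)
    (fun x hx => L2_letters hx x (by simp)) (by norm_num) hr
  simp only [Set.mem_ofPred_eq] at l2 l3 r2 r3
  obtain rfl | ⟨c, w', rfl⟩ : w = [] ∨ ∃ c w', w = c :: w' := by cases w <;> simp
  · simp
  obtain rfl : c = 2 := by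
    rcases L2_letters l2 c (by simp) with rfl | rfl
    · rfl
    · exact absurd (List.prefix_append [3, 3] w').isInfix (L2_no33 l3)
  -- `w` does not end with `3`, since `w3` avoids `33`.
  have hend : ∀ x, 2 :: w' ≠ x ++ [3] := by
    intro x hx
    rw [hx, List.append_assoc] at r3
    exact L2_no33 r3 (List.suffix_append x [3, 3]).isInfix
  have hlong : ∀ t, 2 :: w' ≠ [2, 3, 2, 3, 2, 3, 2] ++ t := by
    intro t ht
    rw [ht] at l3
    exact L2_no_long l3 (List.prefix_append [3, 2, 3, 2, 3, 2, 3, 2] t).isInfix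
  obtain ⟨u, X, Y, hu, e⟩ := L2_unfold l2
  obtain ⟨p, s, rfl, -, hs⟩ := sync u (L0_adm hu) X (w' ++ Y) (by rw [e]; simp)
  have hs0 := L0_factor hu (List.suffix_append p s).isInfix
  have short : 2 :: w' <+: [2, 3, 2, 3, 2] → 2 :: w' <:+: [2, 3, 2, 3, 2] := fun h => h.isInfix
  have hpre : 2 :: w' <+: substW betaT s := ⟨Y, by rw [hs]; simp⟩
  obtain rfl | ⟨s, rfl, hsA⟩ | ⟨s, rfl, hsA⟩ := (L0_adm hs0).cases
  · simp at hs
  · obtain rfl | ⟨s, rfl, hsB⟩ | ⟨s, rfl, hsB⟩ := hsA.cases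
    · exact .inl (short hpre)
    · rcases Nat.lt_or_ge 5 (2 :: w').length with hlen | hlen
      · right
        obtain ⟨b, rfl⟩ : ∃ b, w' = [3, 2, 3, 2, 2] ++ b := by
          rcases w' with _ | ⟨x1, _ | ⟨x2, _ | ⟨x3, _ | ⟨x4, _ | ⟨x5, b⟩⟩⟩⟩⟩ <;> simp at hlen hs
          obtain ⟨rfl, rfl, rfl, rfl, rfl, -⟩ := hs
          exact ⟨b, rfl⟩
        -- `w2` ends with a boundary, so the part of `w` after `23232` is a full image.
        obtain ⟨v, hvA, hvb⟩ : ∃ v, Adm v ∧ substW betaT v = 2 :: b := by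
          obtain ⟨u', X', Y', hu', e'⟩ := L2_unfold r2
          obtain ⟨p', s', rfl, -, hs'⟩ := sync u' (L0_adm hu') (X' ++ [2, 3, 2, 3])
            (b ++ [2] ++ Y') (by rw [e']; simp)
          have hsA' := (L0_adm hu').factor (List.suffix_append p' s').isInfix
          obtain ⟨b', hb'⟩ : ∃ b', 2 :: b = b' ++ [2] := by
            obtain h | ⟨b', c, h⟩ := (2 :: b).eq_nil_or_concat'
            · simp at h
            · have hc : c = 2 ∨ c = 3 := L2_letters r2 c (by
                have : c ∈ 2 :: b := by rw [h]; simp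
                simp at this ⊢
                tauto)
              rcases hc with rfl | rfl
              · exact ⟨b', h⟩
              · refine absurd ?_ (hend ([2, 3, 2, 3, 2] ++ b'))
                rw [List.append_assoc, ← h]
                rfl
          obtain ⟨v, t, rfl, hv, -⟩ := sync s' hsA' b' Y' (by
            rw [hs', show 2 :: (b ++ [2] ++ Y') = (2 :: b) ++ 2 :: Y' by simp, hb']
            simp)
          exact ⟨v, hsA'.factor (List.prefix_append v t).isInfix, by rw [hv, hb']⟩
        have hw : 2 :: ([3, 2, 3, 2, 2] ++ b) = [2, 3, 2, 3, 2] ++ substW betaT v := by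
          rw [hvb]; rfl
        rw [hw] at l3 r2 r3
        refine ⟨v, bispecial_L0_of ?_ ?_ ?_ ?_, ?_, hw⟩
        · obtain ⟨r, hr, -⟩ := prefix_code v (1 :: s) Y hvA hsA (by
            simp at hs
            simp [hvb, hs])
          rw [hr] at hs0
          exact L0_factor hs0 (List.prefix_append (1 :: v) r).isInfix
        · obtain ⟨p, r, x, y, h0, hp, -⟩ := decode (x := [3]) (y := []) hvA hvb (by simpa using l3)
          obtain ⟨q, rfl⟩ := last_two
            ((L0_adm h0).factor ⟨[], v ++ r, by simp⟩) hp
          exact L0_factor h0 ⟨q, r, by simp⟩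
        · obtain ⟨p, r, x, y, h0, -, hr⟩ := decode (x := []) (y := [2]) hvA hvb (by simpa using r2)
          obtain rfl | ⟨t, rfl, -⟩ | ⟨t, rfl, -⟩ :=
            ((L0_adm h0).factor (List.suffix_append (p ++ v) r).isInfix).cases
          · simp at hr
          · exact L0_factor h0 ⟨p, t, by simp⟩
          · simp at hr
        · obtain ⟨p, r, x, y, h0, -, hr⟩ := decode (x := []) (y := [3]) hvA hvb (by simpa using r3)
          obtain rfl | ⟨t, rfl, -⟩ | ⟨t, rfl, -⟩ :=
            ((L0_adm h0).factor (List.suffix_append (p ++ v) r).isInfix).cases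
          · simp at hr
          · simp at hr
          · exact L0_factor h0 ⟨p, t, by simp⟩
        · rintro rfl
          simp at hvb
      · exact .inl (short (List.prefix_of_prefix_length_le hpre
          (List.prefix_append [2, 3, 2, 3, 2] (substW betaT (1 :: s))) hlen))
    · left
      rcases Nat.lt_or_ge 5 (2 :: w').length with hlen | hlen
      · exfalso
        rcases w' with _ | ⟨x1, _ | ⟨x2, _ | ⟨x3, _ | ⟨x4, _ | ⟨x5, _ | ⟨x6, b⟩⟩⟩⟩⟩⟩ <;>
          simp at hlen hs
        · obtain ⟨rfl, rfl, rfl, rfl, rfl, -⟩ := hs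
          exact hend [2, 3, 2, 3, 2] rfl
        · obtain ⟨rfl, rfl, rfl, rfl, rfl, rfl, -⟩ := hs
          exact hlong b rfl
      · exact short (List.prefix_of_prefix_length_le hpre
          (List.prefix_append [2, 3, 2, 3, 2] (substW betaT (2 :: s))) hlen)
  · simp at hs
end

section
/- Let M be the 3×3 integer matrix with rows (5,3,4), (2,0,0), (0,0,1). Then for every n ≥ 0: 35·Mⁿ·(1,0,1)ᵗ = (54·6ⁿ − 5(−1)ⁿ − 14, 18·6ⁿ + 10(−1)ⁿ − 28, 35)ᵗ; 35·Mⁿ·(4,0,1)ᵗ = (144·6ⁿ + 10(−1)ⁿ − 14, 48·6ⁿ − 20(−1)ⁿ − 28, 35)ᵗ; 35·Mⁿ·(3,2,1)ᵗ = (144·6ⁿ − 25(−1)ⁿ − 14, 48·6ⁿ + 50(−1)ⁿ − 28, 35)ᵗ; and 35·Mⁿ·(7,0,1)ᵗ = (234·6ⁿ + 25(−1)ⁿ − 14, 78·6ⁿ − 50(−1)ⁿ − 28, 35)ᵗ. -/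
/-!
The matrix `Mσ` is diagonalizable: `(3, 1, 0)`, `(1, -2, 0)` and `(-14, -28, 35)` are eigenvectors
for the eigenvalues `6`, `-1` and `1`. After scaling by `35`, each of the four vectors is
an integer combination `a • (3, 1, 0) + b • (1, -2, 0) + (-14, -28, 35)`, and `Mσ ^ n` multiplies the
three summands by `6 ^ n`, `(-1) ^ n` and `1`; this is `Mσ_pow_mulVec_eigen`.
-/

open Matrix

/-- The abelianization matrix of `σ̂(w) = 11·σ(w)·11`. -/
def Mσ : Matrix (Fin 3) (Fin 3) ℤ := !![5, 3, 4; 2, 0, 0; 0, 0, 1]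

/-- The action of `Mσ ^ n` on `a • (3, 1, 0) + b • (1, -2, 0) + (-14, -28, 35)`, a sum of
eigenvectors for `6`, `-1` and `1`. -/
lemma Mσ_pow_mulVec_eigen (a b : ℤ) (n : ℕ) :
    (Mσ ^ n).mulVec ![3 * a + b - 14, a - 2 * b - 28, 35] =
      ![3 * a * 6 ^ n + b * (-1) ^ n - 14, a * 6 ^ n - 2 * b * (-1) ^ n - 28, 35] := by
  induction n with
  | zero => simp
  | succ n ih =>
    rw [pow_succ', ← Matrix.mulVec_mulVec, ih]
    ext i
    fin_cases i <;> simp [Mσ, Matrix.mulVec, dotProduct, Fin.sum_univ_three] <;> ring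

/-- The explicit values of `Mⁿ` applied to the abelianization vectors of the words
`1`, `1111`, `12121` and `1111111`. -/
theorem Msigma_pow_apply (n : ℕ) :
    (35 : ℤ) • (Mσ ^ n).mulVec ![1, 0, 1] =
      ![54 * 6^n - 5 * (-1)^n - 14, 18 * 6^n + 10 * (-1)^n - 28, 35] ∧
    (35 : ℤ) • (Mσ ^ n).mulVec ![4, 0, 1] =
      ![144 * 6^n + 10 * (-1)^n - 14, 48 * 6^n - 20 * (-1)^n - 28, 35] ∧
    (35 : ℤ) • (Mσ ^ n).mulVec ![3, 2, 1] =
      ![144 * 6^n - 25 * (-1)^n - 14, 48 * 6^n + 50 * (-1)^n - 28, 35] ∧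
    (35 : ℤ) • (Mσ ^ n).mulVec ![7, 0, 1] =
      ![234 * 6^n + 25 * (-1)^n - 14, 78 * 6^n - 50 * (-1)^n - 28, 35] := by
  simp only [← Matrix.mulVec_smul]
  -- The coefficients `(a, b)` solve `3 * a + b = 35 * x + 14` and `a - 2 * b = 35 * y + 28`
  -- for the initial vector `(x, y, 1)`.
  refine ⟨?_, ?_, ?_, ?_⟩
  · simpa [← sub_eq_add_neg] using Mσ_pow_mulVec_eigen 18 (-5) n
  · simpa [← sub_eq_add_neg] using Mσ_pow_mulVec_eigen 48 10 n
  · simpa [← sub_eq_add_neg] using Mσ_pow_mulVec_eigen 48 (-25) n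
  · simpa [← sub_eq_add_neg] using Mσ_pow_mulVec_eigen 78 25 n
end

section
/- Let a, b, c, d, e, f be rational numbers with a > 0 and b > 0, such that uₙ = a·6ⁿ + c + (−1)ⁿe > 0 and vₙ = b·6ⁿ + d + (−1)ⁿf > 0 for all n ∈ ℕ. Define g(n,k) = 6ⁿ(ak+b) + ck + d + (−1)ⁿ(ek+f) and, for N ∈ ℕ, S_N = card{(n,k) ∈ ℕ×ℕ : g(n,k) ≤ N}. Then S_N = (Σ_{n=0}^{∞} 1/(a·6ⁿ + c + (−1)ⁿe))·N + o(N) as N → ∞; in particular the series Σ_{n≥0} 1/(a·6ⁿ + c + (−1)ⁿe) converges and S_N/N converges to its sum. -/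
open Filter

/-!
Writing `uₙ = a·6ⁿ + c + (-1)ⁿe` and `vₙ = b·6ⁿ + d + (-1)ⁿf`, the counted condition is
`uₙ k + vₙ ≤ N`. For fixed `n` the number `Cₙ(N)` of solutions `k` satisfies
`(N - vₙ)/uₙ ≤ Cₙ(N) ≤ N/uₙ + 1`, so `Cₙ(N)/N → 1/uₙ` (`tendsto_fiber`). Moreover `Cₙ(N) = 0`
unless `vₙ ≤ N`, and in that case `1/N ≤ 1/vₙ`; hence `Cₙ(N)/N ≤ 1/uₙ + 1/vₙ` for every `N`
(`fiber_div_le`). Both `1/uₙ` and `1/vₙ` are summable, being eventually dominated by a geometric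
series (`summable_one_div_geometric`), so dominated convergence for series allows the limit
`N → ∞` to be taken termwise in `S_N/N = Σₙ Cₙ(N)/N` (`tendsto_card_div`).
-/

lemma summable_one_div_geometric (a c e : ℝ) (ha : 0 < a)
    (hu : ∀ n : ℕ, 0 < a * 6^n + c + (-1)^n * e) :
    Summable (fun n : ℕ => (1 : ℝ) / (a * 6^n + c + (-1)^n * e)) := by
  have hg : Summable (fun n : ℕ => 2 / a * (1 / 6 : ℝ) ^ n) :=
    (summable_geometric_of_lt_one (by norm_num) (by norm_num)).mul_left _
  refine hg.of_norm_bounded_eventually_nat ?_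
  have ht : Tendsto (fun n : ℕ => (6 : ℝ) ^ n) atTop atTop :=
    tendsto_pow_atTop_atTop_of_one_lt (by norm_num)
  filter_upwards [ht.eventually_ge_atTop ((|c| + |e|) * (2 / a))] with n hn
  have h6 : (0 : ℝ) < 6 ^ n := by positivity
  have hce : |c| + |e| ≤ a / 2 * 6 ^ n := by
    calc |c| + |e| = a / 2 * ((|c| + |e|) * (2 / a)) := by field_simp
      _ ≤ _ := by gcongr
  have he : -|e| ≤ (-1) ^ n * e := by
    have : |(-1) ^ n * e| = |e| := by simp [abs_mul]
    rw [← this]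
    exact neg_abs_le _
  have hlow : a / 2 * 6 ^ n ≤ a * 6^n + c + (-1)^n * e := by
    linarith [neg_abs_le c]
  rw [Real.norm_of_nonneg (one_div_pos.2 (hu n)).le]
  calc (1 : ℝ) / (a * 6^n + c + (-1)^n * e) ≤ 1 / (a / 2 * 6 ^ n) := by gcongr
    _ = 2 / a * (1 / 6 : ℝ) ^ n := by
      rw [one_div_pow]
      field_simp

lemma fiber_eq_range {u v N : ℝ} (hu : 0 < u) (h : v ≤ N) :
    {k : ℕ | u * k + v ≤ N} = ↑(Finset.range (⌊(N - v) / u⌋₊ + 1)) := by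
  ext k
  have h0 : 0 ≤ (N - v) / u := div_nonneg (by linarith) hu.le
  rw [Set.mem_ofPred_eq, Finset.mem_coe, Finset.mem_range, Nat.lt_succ_iff, Nat.le_floor_iff h0,
    le_div_iff₀ hu]
  constructor <;> intro <;> linarith

lemma fiber_eq_empty {u v N : ℝ} (hu : 0 < u) (h : N < v) :
    {k : ℕ | u * k + v ≤ N} = ∅ := by
  ext k
  have : 0 ≤ u * k := by positivity
  simp only [Set.mem_ofPred_eq, Set.mem_empty_iff_false, iff_false, not_le]
  linarith

lemma finite_fiber {u v N : ℝ} (hu : 0 < u) : {k : ℕ | u * k + v ≤ N}.Finite := by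
  rcases le_or_gt v N with h | h
  · rw [fiber_eq_range hu h]
    exact Finset.finite_toSet _
  · rw [fiber_eq_empty hu h]
    exact Set.finite_empty

lemma le_ncard_fiber {u v N : ℝ} (hu : 0 < u) :
    (N - v) / u ≤ ({k : ℕ | u * k + v ≤ N}.ncard : ℝ) := by
  rcases le_or_gt v N with h | h
  · rw [fiber_eq_range hu h, Set.ncard_coe_finset, Finset.card_range]
    push_cast
    exact (Nat.lt_floor_add_one _).le
  · exact (div_nonpos_of_nonpos_of_nonneg (by linarith) hu.le).trans (Nat.cast_nonneg _)

lemma ncard_fiber_le {u v N : ℝ} (hu : 0 < u) (hv : 0 < v) (h : v ≤ N) :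
    ({k : ℕ | u * k + v ≤ N}.ncard : ℝ) ≤ N / u + 1 := by
  rw [fiber_eq_range hu h, Set.ncard_coe_finset, Finset.card_range]
  push_cast
  gcongr
  refine (Nat.floor_le (div_nonneg (by linarith) hu.le)).trans ?_
  gcongr
  linarith

/-- A bound uniform in `N`: a nonempty fibre forces `v ≤ N`, which turns the rounding error `1/N`
into `1/v`. -/
lemma fiber_div_le {u v N : ℝ} (hu : 0 < u) (hv : 0 < v) :
    ({k : ℕ | u * k + v ≤ N}.ncard : ℝ) / N ≤ 1 / u + 1 / v := by
  rcases le_or_gt v N with h | h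
  · have hN : 0 < N := hv.trans_le h
    calc _ ≤ (N / u + 1) / N := by gcongr; exact ncard_fiber_le hu hv h
      _ = 1 / u + 1 / N := by field_simp
      _ ≤ _ := by gcongr
  · rw [fiber_eq_empty hu h]
    simp only [Set.ncard_empty, Nat.cast_zero, zero_div]
    positivity

lemma tendsto_fiber {u v : ℝ} (hu : 0 < u) (hv : 0 < v) :
    Tendsto (fun N : ℕ => ({k : ℕ | u * k + v ≤ N}.ncard : ℝ) / N) atTop (nhds (1 / u)) := by
  have hlo : Tendsto (fun N : ℕ => 1 / u - (v / u) / (N : ℝ)) atTop (nhds (1 / u)) := by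
    simpa using tendsto_const_nhds.sub (tendsto_const_div_atTop_nhds_zero_nat (v / u))
  have hhi : Tendsto (fun N : ℕ => 1 / u + 1 / (N : ℝ)) atTop (nhds (1 / u)) := by
    simpa using tendsto_const_nhds.add (tendsto_const_div_atTop_nhds_zero_nat (1 : ℝ))
  have hev : ∀ᶠ N : ℕ in atTop, v ≤ (N : ℝ) :=
    tendsto_natCast_atTop_atTop.eventually_ge_atTop v
  refine tendsto_of_tendsto_of_tendsto_of_le_of_le' hlo hhi ?_ ?_
  · filter_upwards [hev] with N h
    have hN : (0 : ℝ) < N := hv.trans_le h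
    calc 1 / u - (v / u) / (N : ℝ) = (N - v) / u / N := by field_simp
      _ ≤ _ := by gcongr; exact le_ncard_fiber hu
  · filter_upwards [hev] with N h
    have hN : (0 : ℝ) < N := hv.trans_le h
    calc _ ≤ ((N : ℝ) / u + 1) / N := by gcongr; exact ncard_fiber_le hu hv h
      _ = _ := by field_simp

lemma card_eq_tsum_fiber {S : Set (ℕ × ℕ)} (hS : S.Finite) :
    (Nat.card S : ℝ) = ∑' n : ℕ, ({k : ℕ | (n, k) ∈ S}.ncard : ℝ) := by
  classical
  have hfib : ∀ n, {k : ℕ | (n, k) ∈ S}.ncard = (hS.toFinset.filter (fun p => p.1 = n)).card := by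
    intro n
    rw [← Set.ncard_coe_finset,
      ← Set.ncard_image_of_injective {k : ℕ | (n, k) ∈ S} (Prod.mk_right_injective n)]
    congr 1
    ext ⟨m, k⟩
    simp only [Set.mem_image, Set.mem_ofPred_eq, Prod.mk.injEq, Finset.coe_filter,
      Set.Finite.mem_toFinset]
    constructor
    · rintro ⟨x, hx, rfl, rfl⟩
      exact ⟨hx, rfl⟩
    · rintro ⟨hx, rfl⟩
      exact ⟨k, hx, rfl, rfl⟩
  rw [tsum_eq_sum (s := hS.toFinset.image Prod.fst), Nat.card_coe_set_eq,
    Set.ncard_eq_toFinset_card S hS, Finset.card_eq_sum_card_image Prod.fst]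
  · push_cast
    simp_rw [hfib]
  · intro n hn
    rw [hfib, Finset.filter_eq_empty_iff.2]
    · simp
    · rintro p hp rfl
      exact hn (Finset.mem_image_of_mem _ hp)

lemma finite_count {u v : ℕ → ℝ} (hu : ∀ n, 0 < u n) (hv : ∀ n, 0 < v n)
    (hsv : Summable fun n => 1 / v n) (N : ℕ) :
    {p : ℕ × ℕ | u p.1 * p.2 + v p.1 ≤ N}.Finite := by
  have hA : {n : ℕ | v n ≤ N}.Finite := by
    have h1 : ∀ᶠ n in cofinite, 1 / v n < 1 / ((N : ℝ) + 1) :=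
      hsv.tendsto_cofinite_zero.eventually_lt_const (by positivity)
    refine Set.Finite.subset (eventually_cofinite.1 h1) fun n hn => ?_
    simp only [Set.mem_ofPred_eq, not_lt] at hn ⊢
    exact one_div_le_one_div_of_le (hv n) (by linarith)
  refine (hA.biUnion fun n _ => (finite_fiber (u := u n) (v := v n) (N := N) (hu n)).image
    (Prod.mk n)).subset ?_
  rintro ⟨n, k⟩ h
  simp only [Set.mem_ofPred_eq] at h
  have : 0 ≤ u n * k := mul_nonneg (hu n).le (Nat.cast_nonneg _)
  exact Set.mem_biUnion (show v n ≤ N by linarith) ⟨k, h, rfl⟩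

lemma tendsto_card_div {u v : ℕ → ℝ} (hu : ∀ n, 0 < u n) (hv : ∀ n, 0 < v n)
    (hsu : Summable fun n => 1 / u n) (hsv : Summable fun n => 1 / v n) :
    Tendsto (fun N : ℕ => (Nat.card {p : ℕ × ℕ | u p.1 * p.2 + v p.1 ≤ N} : ℝ) / N) atTop
      (nhds (∑' n, 1 / u n)) := by
  have heq : ∀ N : ℕ, (Nat.card {p : ℕ × ℕ | u p.1 * p.2 + v p.1 ≤ N} : ℝ) / N =
      ∑' n, ({k : ℕ | u n * k + v n ≤ N}.ncard : ℝ) / N := by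
    intro N
    rw [card_eq_tsum_fiber (finite_count hu hv hsv N), tsum_div_const]
    rfl
  simp_rw [heq]
  refine tendsto_tsum_of_dominated_convergence (hsu.add hsv)
    (fun n => tendsto_fiber (hu n) (hv n)) (Eventually.of_forall fun N n => ?_)
  rw [Real.norm_of_nonneg (by positivity)]
  exact fiber_div_le (hu n) (hv n)

/-- The counting lemma: if `g(n,k) = 6ⁿ(ak+b) + ck + d + (-1)ⁿ(ek+f)` with `a, b > 0` and
`uₙ = a·6ⁿ + c + (-1)ⁿe > 0`, `vₙ = b·6ⁿ + d + (-1)ⁿf > 0` for all `n`, then the series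
`Σ 1/uₙ` converges and `S_N = card {(n,k) : g(n,k) ≤ N}` satisfies
`S_N = (Σ_{n≥0} 1/uₙ)·N + o(N)`, i.e. `S_N/N → Σ_{n≥0} 1/uₙ`. -/
theorem counting_lemma (a b c d e f : ℚ) (ha : 0 < a) (hb : 0 < b)
    (hu : ∀ n : ℕ, 0 < a * 6^n + c + (-1)^n * e)
    (hv : ∀ n : ℕ, 0 < b * 6^n + d + (-1)^n * f) :
    Summable (fun n : ℕ => (1 : ℝ) / ((a : ℝ) * 6^n + c + (-1)^n * e)) ∧
    Tendsto
      (fun N : ℕ =>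
        (Nat.card {p : ℕ × ℕ |
          (6 : ℚ)^p.1 * (a * p.2 + b) + c * p.2 + d + (-1)^p.1 * (e * p.2 + f) ≤ N} : ℝ) / N)
      atTop
      (nhds (∑' n : ℕ, (1 : ℝ) / ((a : ℝ) * 6^n + c + (-1)^n * e))) := by
  have hu' : ∀ n : ℕ, (0 : ℝ) < (a : ℝ) * 6^n + c + (-1)^n * e := fun n => by
    exact_mod_cast hu n
  have hv' : ∀ n : ℕ, (0 : ℝ) < (b : ℝ) * 6^n + d + (-1)^n * f := fun n => by
    exact_mod_cast hv n
  have hsu := summable_one_div_geometric a c e (by exact_mod_cast ha) hu'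
  have hsv := summable_one_div_geometric b d f (by exact_mod_cast hb) hv'
  refine ⟨hsu, ?_⟩
  have hset : ∀ N : ℕ, {p : ℕ × ℕ |
      (6 : ℚ)^p.1 * (a * p.2 + b) + c * p.2 + d + (-1)^p.1 * (e * p.2 + f) ≤ N} =
      {p : ℕ × ℕ | ((a : ℝ) * 6^p.1 + c + (-1)^p.1 * e) * p.2 +
        ((b : ℝ) * 6^p.1 + d + (-1)^p.1 * f) ≤ N} := by
    intro N
    ext p
    simp only [Set.mem_ofPred_eq]
    rw [← Rat.cast_le (K := ℝ)]
    push_cast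
    ring_nf
  have key := tendsto_card_div hu' hv' hsu hsv
  refine key.congr fun N => ?_
  rw [hset N]
end
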